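/- arXiv:2601.16676 — 3 statements merged into one kernel-verified Lean document; each statement's English description precedes it below -/
import Mathlib

section
/- Let m and r be integers with 2 ≤ 2r ≤ m−1, and set α = ⌊r/(m−2r)⌋ and t = r mod (m−2r). Let W = W₀ − λW₁ be the m×m skew-symmetric pencil given by the block-diagonal direct sum of t copies of the block M_{α+1} and (m−2r−t) copies of the block M_α, where M_k is the (2k+1)×(2k+1) pencil [[0, F_k], [−F_kᵀ, 0]] − λ[[0, G_k], [−G_kᵀ, 0]] (F_k, G_k being the k×(k+1) superdiagonal-ones and diagonal-ones matrices). Then the set of pairs (A, B) of skew-symmetric m×m complex matrices such that the pencil A − λB has normal rank at most 2r equals the closure, in the space Matrix (Fin m) (Fin m) ℂ × Matrix (Fin m) (Fin m) ℂ, of the congruence orbit { (Sᵀ W₀ S, Sᵀ W₁ S) : S ∈ Matrix (Fin m) (Fin m) ℂ invertible }. -/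
open Polynomial Matrix

/-- The normal rank of a matrix polynomial: its rank as a matrix over the field of
rational functions ℂ(λ). -/
noncomputable def normalRank {m n : ℕ} (P : Matrix (Fin m) (Fin n) (Polynomial ℂ)) : ℕ :=
  (P.map (algebraMap (Polynomial ℂ) (RatFunc ℂ))).rank

/-- The matrix polynomial `A − λ B` associated with a pencil `(A, B)`. -/
noncomputable def pencilPoly {m : ℕ} (A B : Matrix (Fin m) (Fin m) ℂ) :
    Matrix (Fin m) (Fin m) (Polynomial ℂ) :=
  Matrix.of fun a b => Polynomial.C (A a b) - Polynomial.X * Polynomial.C (B a b)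

/-- The k×(k+1) matrix `F_k` with ones on the superdiagonal. -/
def Fmat (k : ℕ) : Matrix (Fin k) (Fin (k + 1)) ℂ :=
  Matrix.of fun i j => if (j : ℕ) = (i : ℕ) + 1 then 1 else 0

/-- The k×(k+1) matrix `G_k` with ones on the main diagonal. -/
def Gmat (k : ℕ) : Matrix (Fin k) (Fin (k + 1)) ℂ :=
  Matrix.of fun i j => if (j : ℕ) = (i : ℕ) then 1 else 0

/-- The size `2k+1` of the singular block `M_k`. -/
def Msize (k : ℕ) : ℕ := k + (k + 1)

/-- The constant part `[[0, F_k], [−F_kᵀ, 0]]` of the block pencil `M_k`. -/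
noncomputable def MmatA (k : ℕ) : Matrix (Fin (Msize k)) (Fin (Msize k)) ℂ :=
  (Matrix.fromBlocks 0 (Fmat k) (-(Fmat k)ᵀ) 0).submatrix
    finSumFinEquiv.symm finSumFinEquiv.symm

/-- The λ-coefficient `[[0, G_k], [−G_kᵀ, 0]]` of the block pencil `M_k`. -/
noncomputable def MmatB (k : ℕ) : Matrix (Fin (Msize k)) (Fin (Msize k)) ℂ :=
  (Matrix.fromBlocks 0 (Gmat k) (-(Gmat k)ᵀ) 0).submatrix
    finSumFinEquiv.symm finSumFinEquiv.symm

/-- The parameter of the `i`-th block of the generic pencil `W`: `α + 1` for the first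
`t` blocks and `α` for the remaining ones, with `α = ⌊r/(m−2r)⌋` and `t = r mod (m−2r)`. -/
def Wpar (m r : ℕ) (i : Fin (m - 2 * r)) : ℕ :=
  if (i : ℕ) < r % (m - 2 * r) then r / (m - 2 * r) + 1 else r / (m - 2 * r)

/-- The block sizes of the generic pencil `W`. -/
def Wsize (m r : ℕ) (i : Fin (m - 2 * r)) : ℕ := Msize (Wpar m r i)

/-- The constant part of block `i` of the generic pencil `W`. -/
noncomputable def WblkA (m r : ℕ) (i : Fin (m - 2 * r)) :
    Matrix (Fin (Wsize m r i)) (Fin (Wsize m r i)) ℂ := MmatA (Wpar m r i)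

/-- The λ-coefficient of block `i` of the generic pencil `W`. -/
noncomputable def WblkB (m r : ℕ) (i : Fin (m - 2 * r)) :
    Matrix (Fin (Wsize m r i)) (Fin (Wsize m r i)) ℂ := MmatB (Wpar m r i)

/-!
A skew-symmetric pencil `A - λB` of rank at most `2r` admits a subspace of codimension `r` that is
isotropic for both `A` and `B`. In a basis adapted to it the pencil has coefficients
`[[Kᵢ, Cᵢ], [-Cᵢᵀ, 0]]`, with `C` a rectangular pencil with `r` rows.

Among such pencils, `C⁰ = ⨁ₐ (F_{kₐ} - λ G_{kₐ})` with the `kₐ` pairwise differing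
by at most one is generic: the infinitesimal strict equivalence action at `C⁰` is surjective. A
complex line through `C⁰` meets the pencils where surjectivity fails in finitely many points, and
what remains of the line is connected, so it lies in a single equivalence class, which is therefore
dense. When `C = C⁰`, the `K` block is removed by a congruence `[[1, 0], [z, 1]]`, which adds
`Cz - (Cz)ᵀ` to it; these matrices exhaust the skew-symmetric pairs by duality for the trace form.
-/

section WellFoundedLimsup

open Filter

theorem eventually_le_limsup_of_wellFoundedLT {α ι : Type*} [CompleteLattice α] [WellFoundedLT α]
    (u : ι → α) (f : Filter ι) : ∀ᶠ i in f, u i ≤ limsup u f := by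
  obtain ⟨-, ⟨s, hs, rfl⟩, hmin⟩ := WellFounded.has_min (wellFounded_lt (α := α))
    ((fun s => ⨆ i ∈ s, u i) '' f.sets) ⟨_, _, univ_mem, rfl⟩
  refine mem_of_superset hs fun i hi => ?_
  rw [limsup_eq_iInf_iSup]
  refine (le_iSup₂ (f := fun i (_ : i ∈ s) => u i) i hi).trans (le_iInf₂ fun t ht => ?_)
  have hle : ⨆ i ∈ s ∩ t, u i ≤ ⨆ i ∈ s, u i := biSup_mono fun _ h => h.1
  have heq : ⨆ i ∈ s ∩ t, u i = ⨆ i ∈ s, u i :=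
    eq_of_le_of_not_lt hle (hmin _ ⟨_, inter_mem hs ht, rfl⟩)
  exact heq ▸ biSup_mono fun _ h => h.2

end WellFoundedLimsup

section IsotropicSubspaces

open Module Filter
open LinearMap (BilinForm)

variable {K V : Type*} [Field K] [AddCommGroup V] [Module K V] {A B : BilinForm K V}

theorem orthogonal_eq_dualCoannihilator_map (B : BilinForm K V) (U : Submodule K V) :
    B.orthogonal U = (U.map B).dualCoannihilator := by
  rw [← BilinForm.toLin_restrict_range_dualCoannihilator_eq_orthogonal,
    LinearMap.range_domRestrict]

theorem orthogonal_le_orthogonal_of_map_le {U : Submodule K V} (h : U.map A ≤ U.map B) :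
    B.orthogonal U ≤ A.orthogonal U := by
  simpa only [orthogonal_eq_dualCoannihilator_map] using Submodule.dualCoannihilator_anti h

theorem finrank_map_add_finrank_orthogonal [FiniteDimensional K V] (B : BilinForm K V)
    (U : Submodule K V) :
    finrank K (U.map B) + finrank K (B.orthogonal U) = finrank K V := by
  rw [orthogonal_eq_dualCoannihilator_map]
  exact Subspace.finrank_add_finrank_dualCoannihilator_eq _

theorem sup_le_orthogonal_sup (hB : B.IsRefl) {U L : Submodule K V} (hU : U ≤ B.orthogonal U)
    (hL : L ≤ B.orthogonal L) (hUL : L ≤ B.orthogonal U) : U ⊔ L ≤ B.orthogonal (U ⊔ L) := by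
  have hLU : U ≤ B.orthogonal L := fun u hu l hl => hB u l (hUL hl u hu)
  have key : ∀ z ∈ B.orthogonal U ⊓ B.orthogonal L, z ∈ B.orthogonal (U ⊔ L) := by
    rintro z ⟨hzU, hzL⟩ w hw
    obtain ⟨u, hu, l, hl, rfl⟩ := Submodule.mem_sup.1 hw
    rw [map_add, LinearMap.add_apply, hzU u hu, hzL l hl, add_zero]
  exact sup_le (fun u hu => key u ⟨hU hu, hLU hu⟩) fun l hl => key l ⟨hUL hl, hL hl⟩

theorem map_subtype_le_orthogonal {C : Submodule K V} {L : Submodule K C}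
    (hL : L ≤ (B.restrict C).orthogonal L) :
    L.map C.subtype ≤ B.orthogonal (L.map C.subtype) := by
  rintro _ ⟨y, hy, rfl⟩ _ ⟨x, hx, rfl⟩
  exact hL hy x hx

/-- Two bilinear forms have a common totally isotropic subspace of dimension at least half the
dimension of the space. A subspace `L` is totally isotropic for `B` when `L ≤ B.orthogonal L`. -/
def HasHalfDimIsotropic (A B : BilinForm K V) : Prop :=
  ∃ L : Submodule K V, L ≤ A.orthogonal L ∧ L ≤ B.orthogonal L ∧
    finrank K V ≤ 2 * finrank K L

theorem HasHalfDimIsotropic.symm (h : HasHalfDimIsotropic A B) : HasHalfDimIsotropic B A :=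
  let ⟨L, hA, hB, hdim⟩ := h
  ⟨L, hB, hA, hdim⟩

theorem span_singleton_le_orthogonal (hB : B.IsAlt) (x : V) :
    K ∙ x ≤ B.orthogonal (K ∙ x) := by
  intro y hy z hz
  obtain ⟨a, rfl⟩ := Submodule.mem_span_singleton.1 hy
  obtain ⟨b, rfl⟩ := Submodule.mem_span_singleton.1 hz
  simp [hB.self_eq_zero]

/-- The span of the kernels `ker (A - μ • B)` over almost all values of `μ`. Discarding any further
finite set of values does not shrink it, so it is a span over values as generic as needed. -/
noncomputable def genericKer (A B : BilinForm K V) : Submodule K V :=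
  limsup (fun μ : K => LinearMap.ker (A - μ • B)) cofinite

theorem mem_ker_sub_smul {μ : K} {x : V} : x ∈ LinearMap.ker (A - μ • B) ↔ A x = μ • B x := by
  rw [LinearMap.mem_ker, LinearMap.sub_apply, LinearMap.smul_apply, sub_eq_zero]

theorem genericKer_le {N : Submodule K V}
    (h : ∀ᶠ μ : K in cofinite, LinearMap.ker (A - μ • B) ≤ N) : genericKer A B ≤ N :=
  limsup_le_of_le (by isBoundedDefault) h

theorem ker_le_orthogonal_ker (hA : A.IsAlt) (hB : B.IsAlt) {μ ν : K} (hμν : μ ≠ ν) :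
    LinearMap.ker (A - ν • B) ≤ B.orthogonal (LinearMap.ker (A - μ • B)) := by
  intro y hy x hx
  rw [mem_ker_sub_smul] at hx hy
  have hxy : A x y = μ * B x y := by simp [hx]
  have hyx : A y x = ν * B y x := by simp [hy]
  rw [← hA.neg_eq, ← hB.neg_eq] at hyx
  have : (μ - ν) * B x y = 0 := by linear_combination -hxy - hyx
  exact (mul_eq_zero.1 this).resolve_left (sub_ne_zero.2 hμν)

theorem genericKer_le_orthogonal_self (hA : A.IsAlt) (hB : B.IsAlt) :
    genericKer A B ≤ B.orthogonal (genericKer A B) := by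
  have hker (μ : K) : genericKer A B ≤ B.orthogonal (LinearMap.ker (A - μ • B)) :=
    genericKer_le <| (eventually_cofinite_ne μ).mono fun ν hν =>
      ker_le_orthogonal_ker hA hB hν.symm
  refine genericKer_le <| .of_forall fun μ x hx y hy => ?_
  exact hB.isRefl _ _ (hker μ hy x hx)

variable [FiniteDimensional K V]

-- `L` is the sum of `U` and half of a complement of `U` in its orthogonal space.
theorem exists_isotropic_of_map_le (hA : A.IsAlt) (hB : B.IsAlt) {U : Submodule K V}
    (hU : U ≤ B.orthogonal U) (hAB : U.map A ≤ U.map B)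
    (hhalf : ∀ C : Submodule K V, Disjoint U C →
      HasHalfDimIsotropic (A.restrict C) (B.restrict C)) :
    ∃ L : Submodule K V, L ≤ A.orthogonal L ∧ L ≤ B.orthogonal L ∧
      finrank K V + finrank K U ≤ 2 * finrank K L + finrank K (U.map B) := by
  obtain ⟨C, hUC, hsup⟩ := IsModularLattice.exists_disjoint_and_sup_eq hU
  obtain ⟨L, hLA, hLB, hL⟩ := hhalf C hUC
  have hBA : B.orthogonal U ≤ A.orthogonal U := orthogonal_le_orthogonal_of_map_le hAB
  have hLC : L.map C.subtype ≤ C := Submodule.map_subtype_le C L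
  have hLU : L.map C.subtype ≤ B.orthogonal U := hLC.trans (hsup ▸ le_sup_right)
  refine ⟨U ⊔ L.map C.subtype, ?_, ?_, ?_⟩
  · exact sup_le_orthogonal_sup hA.isRefl (hU.trans hBA) (map_subtype_le_orthogonal hLA)
      (hLU.trans hBA)
  · exact sup_le_orthogonal_sup hB.isRefl hU (map_subtype_le_orthogonal hLB) hLU
  · have hdimL : finrank K (U ⊔ L.map C.subtype : Submodule K V) = finrank K U + finrank K L := by
      have h := Submodule.finrank_sup_add_finrank_inf_eq U (L.map C.subtype)
      rwa [(hUC.mono_right hLC).eq_bot, finrank_bot, add_zero,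
        Submodule.finrank_map_subtype_eq] at h
    have hdimC := Submodule.finrank_add_le_finrank_add_finrank U C
    have hdimV := finrank_map_add_finrank_orthogonal B U
    rw [hsup] at hdimC
    omega

theorem exists_ne_zero_mem_span_singleton [IsAlgClosed K] [Nontrivial V] (A B : BilinForm K V) :
    ∃ x : V, x ≠ 0 ∧ (A x ∈ K ∙ B x ∨ B x ∈ K ∙ A x) := by
  by_cases hinj : Function.Injective B
  · have hsurj : Function.Surjective B :=
      (LinearMap.injective_iff_surjective_of_finrank_eq_finrank
        Subspace.dual_finrank_eq.symm).1 hinj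
    let e : V ≃ₗ[K] Dual K V := LinearEquiv.ofBijective B ⟨hinj, hsurj⟩
    obtain ⟨μ, hμ⟩ := Module.End.exists_eigenvalue (e.symm.toLinearMap ∘ₗ A)
    obtain ⟨x, hx⟩ := hμ.exists_hasEigenvector
    have hAx : A x = μ • B x := by
      rw [← e.apply_symm_apply (A x), ← LinearEquiv.coe_coe e.symm, ← LinearMap.comp_apply,
        hx.apply_eq_smul]
      exact map_smul e μ x
    exact ⟨x, hx.2, Or.inl (Submodule.mem_span_singleton.2 ⟨μ, hAx.symm⟩)⟩
  · obtain ⟨x, hx, hx0⟩ := B.ker.exists_mem_ne_zero_of_ne_bot (mt LinearMap.ker_eq_bot.1 hinj)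
    exact ⟨x, hx0, Or.inr (by simp [LinearMap.mem_ker.1 hx])⟩

theorem hasHalfDimIsotropic_of_mem_span_singleton (hA : A.IsAlt) (hB : B.IsAlt) {x : V}
    (hx : x ≠ 0) (hAB : A x ∈ K ∙ B x)
    (hhalf : ∀ C : Submodule K V, finrank K C < finrank K V →
      HasHalfDimIsotropic (A.restrict C) (B.restrict C)) :
    HasHalfDimIsotropic A B := by
  have hmap : (K ∙ x).map A ≤ (K ∙ x).map B := by
    simpa only [Submodule.map_span, Set.image_singleton, Submodule.span_singleton_le_iff_mem]
      using hAB
  obtain ⟨L, hLA, hLB, hL⟩ := exists_isotropic_of_map_le hA hB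
    (span_singleton_le_orthogonal hB x) hmap fun C hC => hhalf C <| Submodule.finrank_lt <| by
      rintro rfl
      exact hx (by simpa using hC)
  have := Submodule.finrank_map_le B (K ∙ x)
  exact ⟨L, hLA, hLB, by omega⟩

theorem hasHalfDimIsotropic_of_isAlt [IsAlgClosed K] (hA : A.IsAlt) (hB : B.IsAlt) :
    HasHalfDimIsotropic A B := by
  induction hn : finrank K V using Nat.strong_induction_on generalizing V with
  | _ n ih =>
    rcases subsingleton_or_nontrivial V with hV | hV
    · exact ⟨⊥, bot_le, bot_le, by simp [finrank_zero_of_subsingleton]⟩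
    have hhalf (C : Submodule K V) (hC : finrank K C < finrank K V) :
        HasHalfDimIsotropic (A.restrict C) (B.restrict C) :=
      ih _ (hn ▸ hC) (fun x => hA x) (fun x => hB x) rfl
    obtain ⟨x, hx, hAB | hBA⟩ := exists_ne_zero_mem_span_singleton A B
    · exact hasHalfDimIsotropic_of_mem_span_singleton hA hB hx hAB hhalf
    · exact (hasHalfDimIsotropic_of_mem_span_singleton hB hA hx hBA
        fun C hC => (hhalf C hC).symm).symm

theorem eventually_ker_le_genericKer (A B : BilinForm K V) :
    ∀ᶠ μ : K in cofinite, LinearMap.ker (A - μ • B) ≤ genericKer A B :=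
  eventually_le_limsup_of_wellFoundedLT _ _

theorem map_genericKer_le (A B : BilinForm K V) :
    (genericKer A B).map A ≤ (genericKer A B).map B := by
  rw [Submodule.map_le_iff_le_comap]
  refine genericKer_le <| (eventually_ker_le_genericKer A B).mono fun μ hμ x hx => ?_
  rw [Submodule.mem_comap, mem_ker_sub_smul.1 hx]
  exact Submodule.smul_mem _ _ (Submodule.mem_map_of_mem (hμ hx))

theorem map_genericKer_le_map_sub_smul (A B : BilinForm K V) (μ : K) :
    (genericKer A B).map B ≤ (genericKer A B).map (A - μ • B) := by
  rw [Submodule.map_le_iff_le_comap]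
  refine genericKer_le ?_
  filter_upwards [eventually_ker_le_genericKer A B, eventually_cofinite_ne μ] with ν hν hne x hx
  refine ⟨(ν - μ)⁻¹ • x, Submodule.smul_mem _ _ (hν hx), ?_⟩
  rw [map_smul, LinearMap.sub_apply, LinearMap.smul_apply, mem_ker_sub_smul.1 hx,
    ← sub_smul ν μ (B x), inv_smul_smul₀ (sub_ne_zero.2 hne)]

theorem finrank_map_add_finrank_ker {W : Type*} [AddCommGroup W] [Module K W] (f : V →ₗ[K] W)
    {U : Submodule K V} (hU : LinearMap.ker f ≤ U) :
    finrank K (U.map f) + finrank K (LinearMap.ker f) = finrank K U := by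
  rw [← LinearMap.finrank_range_add_finrank_ker (f.domRestrict U), LinearMap.range_domRestrict,
    LinearMap.ker_domRestrict, (Submodule.comapSubtypeEquivOfLe hU).finrank_eq]

theorem exists_isotropic_of_finrank_range_le [IsAlgClosed K] (hA : A.IsAlt) (hB : B.IsAlt) {s : ℕ}
    (hrank : ∀ μ : K, finrank K (LinearMap.range (A - μ • B)) ≤ 2 * s) :
    ∃ L : Submodule K V, L ≤ A.orthogonal L ∧ L ≤ B.orthogonal L ∧
      finrank K V ≤ finrank K L + s := by
  obtain ⟨L, hLA, hLB, hL⟩ := exists_isotropic_of_map_le hA hB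
    (genericKer_le_orthogonal_self hA hB) (map_genericKer_le A B) fun C _ =>
      hasHalfDimIsotropic_of_isAlt (A := A.restrict C) (B := B.restrict C)
        (fun x => hA x) (fun x => hB x)
  obtain ⟨μ, hμ⟩ := (eventually_ker_le_genericKer A B).exists
  have hmap := Submodule.finrank_mono (map_genericKer_le_map_sub_smul A B μ)
  have hker := finrank_map_add_finrank_ker (A - μ • B) hμ
  have hrange := LinearMap.finrank_range_add_finrank_ker (A - μ • B)
  have := hrank μ
  exact ⟨L, hLA, hLB, by omega⟩

end IsotropicSubspaces

section RankMinors

variable {K m n : Type*} [Field K] [Finite m] [Fintype n]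

theorem exists_linearIndependent_row_submatrix {M : Matrix m n K} {k : ℕ} (hk : k ≤ M.rank) :
    ∃ f : Fin k → m, LinearIndependent K (M.submatrix f id).row := by
  rw [rank_eq_finrank_span_row] at hk
  obtain ⟨v, hv, -, hli⟩ := Submodule.exists_fun_fin_finrank_span_eq K (Set.range M.row)
  choose f hf using hv
  refine ⟨f ∘ Fin.castLE hk, ?_⟩
  have hrow : (M.submatrix (f ∘ Fin.castLE hk) id).row = v ∘ Fin.castLE hk :=
    funext fun i => hf (Fin.castLE hk i)
  exact hrow ▸ hli.comp _ (Fin.castLE_injective hk)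

theorem exists_det_submatrix_ne_zero {M : Matrix m n K} {k : ℕ} (hk : k ≤ M.rank) :
    ∃ (f : Fin k → m) (g : Fin k → n), (M.submatrix f g).det ≠ 0 := by
  obtain ⟨f, hf⟩ := exists_linearIndependent_row_submatrix hk
  have hrank : (M.submatrix f id)ᵀ.rank = k := by
    rw [rank_transpose, hf.rank_matrix, Fintype.card_fin]
  obtain ⟨g, hg⟩ := exists_linearIndependent_row_submatrix hrank.ge
  rw [linearIndependent_rows_iff_isUnit, isUnit_iff_isUnit_det] at hg
  refine ⟨f, g, ?_⟩
  rw [← det_transpose]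
  exact hg.ne_zero

theorem rank_le_iff_forall_det_submatrix_eq_zero {M : Matrix m n K} {k : ℕ} :
    M.rank ≤ k ↔
      ∀ (f : Fin (k + 1) → m) (g : Fin (k + 1) → n), (M.submatrix f g).det = 0 := by
  constructor
  · intro h f g
    by_contra hdet
    have hminor := rank_of_det_ne_zero hdet
    have hsub := rank_submatrix_le M f g
    rw [Fintype.card_fin] at hminor
    omega
  · intro h
    by_contra! hk
    obtain ⟨f, g, hfg⟩ := exists_det_submatrix_ne_zero (Nat.succ_le_of_lt hk)
    exact hfg (h f g)

theorem isClosed_setOf_rank_le [TopologicalSpace K] [IsTopologicalRing K] [T1Space K] (k : ℕ) :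
    IsClosed {M : Matrix m n K | M.rank ≤ k} := by
  simp only [rank_le_iff_forall_det_submatrix_eq_zero, Set.ofPred_forall]
  exact isClosed_iInter fun f => isClosed_iInter fun g =>
    isClosed_singleton.preimage (f := fun M : Matrix m n K => (M.submatrix f g).det) (by fun_prop)

theorem rank_map_algebraMap_ratFunc_le_iff [Infinite K] {P : Matrix m n K[X]} {k : ℕ} :
    (P.map (algebraMap K[X] (RatFunc K))).rank ≤ k ↔ ∀ μ : K, (P.map (eval μ)).rank ≤ k := by
  simp only [rank_le_iff_forall_det_submatrix_eq_zero]
  have hratFunc (f : Fin (k + 1) → m) (g : Fin (k + 1) → n) :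
      ((P.map (algebraMap K[X] (RatFunc K))).submatrix f g).det = 0 ↔
        (P.submatrix f g).det = 0 := by
    rw [← map_eq_zero_iff _ (RatFunc.algebraMap_injective K), RingHom.map_det]
    rfl
  have heval (μ : K) (f : Fin (k + 1) → m) (g : Fin (k + 1) → n) :
      ((P.map (eval μ)).submatrix f g).det = (P.submatrix f g).det.eval μ := by
    rw [← coe_evalRingHom, RingHom.map_det]
    rfl
  simp only [hratFunc, heval]
  exact ⟨fun h μ f g => by rw [h f g, eval_zero],
    fun h f g => Polynomial.funext fun μ => by rw [h μ f g, eval_zero]⟩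

theorem normalRank_pencilPoly_le_iff {m k : ℕ} {A B : Matrix (Fin m) (Fin m) ℂ} :
    normalRank (pencilPoly A B) ≤ k ↔ ∀ μ : ℂ, (A - μ • B).rank ≤ k := by
  have heval (μ : ℂ) : (pencilPoly A B).map (eval μ) = A - μ • B := by
    ext i j
    simpa [pencilPoly] using mul_comm _ _
  simp only [normalRank, rank_map_algebraMap_ratFunc_le_iff, heval]

end RankMinors

section LocalSurjectivity

theorem map_nhds_zero_of_surjective_add_quadratic {𝕜 E F : Type*} [NontriviallyNormedField 𝕜]
    [CompleteSpace 𝕜] [NormedAddCommGroup E] [NormedSpace 𝕜 E] [FiniteDimensional 𝕜 E]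
    [NormedAddCommGroup F] [NormedSpace 𝕜 F] [FiniteDimensional 𝕜 F]
    (P : F) {D : E →ₗ[𝕜] F} (hD : Function.Surjective D) (Q : E →ₗ[𝕜] E →ₗ[𝕜] F) :
    Filter.map (fun h => P + D h + Q h h) (nhds 0) = nhds P := by
  have : CompleteSpace E := FiniteDimensional.complete 𝕜 E
  have : CompleteSpace F := FiniteDimensional.complete 𝕜 F
  let D' : E →L[𝕜] F := LinearMap.toContinuousLinearMap D
  let Q' : E →L[𝕜] E →L[𝕜] F :=
    LinearMap.toContinuousLinearMap (LinearMap.toContinuousLinearMap.toLinearMap ∘ₗ Q)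
  have hQ : HasStrictFDerivAt (fun h => Q' h h) (0 : E →L[𝕜] F) 0 :=
    ((Q'.hasStrictFDerivAt (x := 0)).clm_apply (hasStrictFDerivAt_id 0)).congr_fderiv
      (by ext; simp)
  have hderiv : HasStrictFDerivAt (fun h => P + D' h + Q' h h) D' 0 :=
    (((D'.hasStrictFDerivAt (x := 0)).const_add P).add hQ).congr_fderiv (by simp)
  have hzero : P + D' 0 + Q' 0 0 = P := by simp
  have hmap := hderiv.map_nhds_eq_of_surj (LinearMap.range_eq_top.2 hD)
  rw [hzero] at hmap
  exact hmap

-- With `R` a right inverse of `D₁`, surjectivity can only fail when `-t⁻¹` is an eigenvalue of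
-- `D₂ ∘ R`.
theorem finite_setOf_not_surjective_add_smul {K E F : Type*} [Field K] [AddCommGroup E]
    [Module K E] [AddCommGroup F] [Module K F] [FiniteDimensional K F] {D₁ : E →ₗ[K] F}
    (h₁ : Function.Surjective D₁) (D₂ : E →ₗ[K] F) :
    {t : K | ¬ Function.Surjective (D₁ + t • D₂)}.Finite := by
  obtain ⟨R, hR⟩ := D₁.exists_rightInverse_of_surjective (LinearMap.range_eq_top.2 h₁)
  let N : Module.End K F := D₂ ∘ₗ R
  refine ((Module.End.finite_hasEigenvalue N).image fun μ => -μ⁻¹).subset fun t ht => ?_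
  have hcomp : (D₁ + t • D₂) ∘ₗ R = 1 + t • N := by
    rw [LinearMap.add_comp, LinearMap.smul_comp, hR]
    rfl
  have hinj : ¬ Function.Injective (1 + t • N : Module.End K F) := fun hinj =>
    ht <| Function.Surjective.of_comp (g := R) <| by
      rw [← LinearMap.coe_comp, hcomp]
      exact LinearMap.surjective_of_injective hinj
  obtain ⟨x, hx, hx0⟩ :=
    Submodule.exists_mem_ne_zero_of_ne_bot (mt LinearMap.ker_eq_bot.1 hinj)
  have hx' : x + t • N x = 0 := hx
  have ht0 : t ≠ 0 := by
    rintro rfl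
    exact hx0 (by simpa using hx')
  have heig : N x = (-t⁻¹) • x := by
    rw [← inv_smul_smul₀ ht0 (N x), ← neg_eq_of_add_eq_zero_right hx', smul_neg, neg_smul]
  exact ⟨-t⁻¹, Module.End.hasEigenvalue_of_hasEigenvector
    (Module.End.hasEigenvector_iff.2 ⟨Module.End.mem_eigenspace_iff.2 heig, hx0⟩), by simp⟩

end LocalSurjectivity

section StrictEquivalence

variable {R ι κ : Type*} [CommRing R] [Fintype ι] [Fintype κ] [DecidableEq ι] [DecidableEq κ]

/-- Strict equivalence of the rectangular pencils `P.1 - λ P.2` and `Q.1 - λ Q.2`: multiplication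
on the left and on the right by constant invertible matrices. -/
def StrictlyEquivalent (P Q : Matrix ι κ R × Matrix ι κ R) : Prop :=
  ∃ (X : Matrix ι ι R) (Y : Matrix κ κ R), IsUnit X ∧ IsUnit Y ∧
    Q.1 = X * P.1 * Y ∧ Q.2 = X * P.2 * Y

theorem StrictlyEquivalent.trans {P Q T : Matrix ι κ R × Matrix ι κ R}
    (hPQ : StrictlyEquivalent P Q) (hQT : StrictlyEquivalent Q T) : StrictlyEquivalent P T := by
  obtain ⟨X, Y, hX, hY, hQ₁, hQ₂⟩ := hPQ
  obtain ⟨X', Y', hX', hY', hT₁, hT₂⟩ := hQT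
  exact ⟨X' * X, Y * Y', hX'.mul hX, hY.mul hY', by simp only [hT₁, hQ₁, Matrix.mul_assoc],
    by simp only [hT₂, hQ₂, Matrix.mul_assoc]⟩

theorem StrictlyEquivalent.symm {P Q : Matrix ι κ R × Matrix ι κ R}
    (h : StrictlyEquivalent P Q) : StrictlyEquivalent Q P := by
  obtain ⟨_, _, ⟨X, rfl⟩, ⟨Y, rfl⟩, hQ₁, hQ₂⟩ := h
  have hcancel (M : Matrix ι κ R) :
      M = (X⁻¹ : (Matrix ι ι R)ˣ).val * (X.val * M * Y.val) * (Y⁻¹ : (Matrix κ κ R)ˣ).val := by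
    rw [Matrix.mul_assoc X.val, ← Matrix.mul_assoc, Units.inv_mul, Matrix.one_mul,
      Matrix.mul_assoc, Units.mul_inv, Matrix.mul_one]
  exact ⟨_, _, X⁻¹.isUnit, Y⁻¹.isUnit, hQ₁ ▸ hcancel P.1, hQ₂ ▸ hcancel P.2⟩

/-- The infinitesimal action of strict equivalence: the derivative at `0` of
`(x, y) ↦ (1 + x) P (1 + y)`, as a bilinear function of `P` and `(x, y)`. -/
def strictEquivalenceDeriv (R ι κ : Type*) [CommRing R] [Fintype ι] [Fintype κ] :
    Matrix ι κ R × Matrix ι κ R →ₗ[R] Matrix ι ι R × Matrix κ κ R →ₗ[R]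
      Matrix ι κ R × Matrix ι κ R :=
  LinearMap.mk₂ R (fun P h => (h.1 * P.1 + P.1 * h.2, h.1 * P.2 + P.2 * h.2))
    (fun P Q h => by ext <;> simp [Matrix.mul_add, Matrix.add_mul] <;> ring)
    (fun c P h => by ext <;> simp)
    (fun P h g => by ext <;> simp [Matrix.mul_add, Matrix.add_mul] <;> ring)
    (fun c P h => by ext <;> simp)

attribute [local instance] Matrix.normedAddCommGroup Matrix.normedSpace

theorem eventually_strictlyEquivalent {P : Matrix ι κ ℂ × Matrix ι κ ℂ}
    (hP : Function.Surjective (strictEquivalenceDeriv ℂ ι κ P)) :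
    ∀ᶠ Q in nhds P, StrictlyEquivalent P Q := by
  let quad : Matrix ι ι ℂ × Matrix κ κ ℂ →ₗ[ℂ] Matrix ι ι ℂ × Matrix κ κ ℂ →ₗ[ℂ]
      Matrix ι κ ℂ × Matrix ι κ ℂ :=
    LinearMap.mk₂ ℂ (fun h g => (h.1 * P.1 * g.2, h.1 * P.2 * g.2))
      (fun h h' g => by ext <;> simp [Matrix.add_mul])
      (fun c h g => by ext <;> simp)
      (fun h g g' => by ext <;> simp [Matrix.mul_add])
      (fun c h g => by ext <;> simp)
  have hmap : Filter.map (fun h => P + strictEquivalenceDeriv ℂ ι κ P h + quad h h) (nhds 0) =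
      nhds P := map_nhds_zero_of_surjective_add_quadratic P hP quad
  rw [← hmap, Filter.eventually_map]
  have hleft : ∀ᶠ h : Matrix ι ι ℂ × Matrix κ κ ℂ in nhds 0, (1 + h.1).det ≠ 0 :=
    ContinuousAt.eventually_ne (by fun_prop) (by simp)
  have hright : ∀ᶠ h : Matrix ι ι ℂ × Matrix κ κ ℂ in nhds 0, (1 + h.2).det ≠ 0 :=
    ContinuousAt.eventually_ne (by fun_prop) (by simp)
  have hexpand (M : Matrix ι κ ℂ) (x : Matrix ι ι ℂ) (y : Matrix κ κ ℂ) :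
      M + (x * M + M * y) + x * M * y = (1 + x) * M * (1 + y) := by
    simp only [Matrix.add_mul, Matrix.mul_add, Matrix.one_mul, Matrix.mul_one]
    abel
  filter_upwards [hleft, hright] with h hX hY
  exact ⟨1 + h.1, 1 + h.2, (isUnit_iff_isUnit_det _).2 hX.isUnit,
    (isUnit_iff_isUnit_det _).2 hY.isUnit, hexpand _ _ _, hexpand _ _ _⟩

theorem dense_setOf_strictlyEquivalent_of_surjective {W : Matrix ι κ ℂ × Matrix ι κ ℂ}
    (hW : Function.Surjective (strictEquivalenceDeriv ℂ ι κ W)) :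
    Dense {P | StrictlyEquivalent W P} := by
  intro P
  let path : ℂ → Matrix ι κ ℂ × Matrix ι κ ℂ := fun t => W + t • (P - W)
  have hpath : Continuous path := by fun_prop
  let bad : Set ℂ := {t | ¬ Function.Surjective (strictEquivalenceDeriv ℂ ι κ (path t))}
  have hbad : bad.Finite := by
    simpa only [bad, path, map_add, map_smul] using
      finite_setOf_not_surjective_add_smul hW (strictEquivalenceDeriv ℂ ι κ (P - W))
  have hconn : IsPreconnected badᶜ :=
    (hbad.countable.isPathConnected_compl_of_one_lt_rank
      (by simp [Complex.rank_real_complex])).isConnected.isPreconnected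
  have hzero : (0 : ℂ) ∈ badᶜ := by simpa [bad, path] using hW
  have hequiv (t : ℂ) (ht : t ∈ badᶜ) : StrictlyEquivalent W (path t) := by
    have := hconn.induction₂ (fun s t => StrictlyEquivalent (path s) (path t))
      (fun s hs => (hpath.continuousAt.eventually <|
        eventually_strictlyEquivalent (not_not.1 hs)).filter_mono nhdsWithin_le_nhds)
      (fun _ _ _ _ _ _ => .trans) (fun _ _ _ _ => .symm) hzero ht
    simpa [path] using this
  have hone : path 1 ∈ closure (path '' badᶜ) :=
    image_closure_subset_closure_image hpath ⟨1, hbad.countable.dense_compl ℂ 1, rfl⟩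
  have hP : path 1 = P := by simp [path]
  rw [← hP]
  refine closure_mono ?_ hone
  rintro _ ⟨t, ht, rfl⟩
  exact hequiv t ht

end StrictEquivalence

section TraceDuality

variable {K ι κ : Type*} [Field K] [Fintype ι] [Fintype κ]

theorem exists_trace_mul_separating {S : Submodule K (Matrix ι κ K × Matrix ι κ K)}
    {P : Matrix ι κ K × Matrix ι κ K} (hP : P ∉ S) :
    ∃ p q : Matrix κ ι K, (∀ M ∈ S, trace (p * M.1) + trace (q * M.2) = 0) ∧
      trace (p * P.1) + trace (q * P.2) ≠ 0 := by
  classical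
  obtain ⟨φ, hφP, hφS⟩ := S.exists_le_ker_of_notMem hP
  have represent (ψ : Matrix ι κ K →ₗ[K] K) :
      ∃ p : Matrix κ ι K, ∀ M, trace (p * M) = ψ M := by
    refine ⟨of fun j i => ψ (single i j 1), fun M => ?_⟩
    induction M using Matrix.induction_on' with
    | h_zero => simp
    | h_add M N hM hN => rw [Matrix.mul_add, trace_add, hM, hN, map_add]
    | h_std_basis i j x =>
      rw [trace_mul_single, of_apply, ← mul_one x, ← smul_eq_mul, ← smul_single, map_smul]
      simp [mul_comm]
  obtain ⟨p, hp⟩ := represent (φ ∘ₗ LinearMap.inl K _ _)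
  obtain ⟨q, hq⟩ := represent (φ ∘ₗ LinearMap.inr K _ _)
  have hφ (M : Matrix ι κ K × Matrix ι κ K) : trace (p * M.1) + trace (q * M.2) = φ M := by
    rw [hp, hq, LinearMap.comp_apply, LinearMap.comp_apply, ← map_add]
    simp
  exact ⟨p, q, fun M hM => (hφ M).trans (hφS hM), fun h => hφP ((hφ P).symm.trans h)⟩

theorem strictEquivalenceDeriv_surjective {P : Matrix ι κ K × Matrix ι κ K}
    (hP : ∀ u v : Matrix κ ι K, u * P.1 + v * P.2 = 0 → P.1 * u + P.2 * v = 0 → u = 0 ∧ v = 0) :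
    Function.Surjective (strictEquivalenceDeriv K ι κ P) := by
  rw [← LinearMap.range_eq_top, eq_top_iff]
  intro Q _
  by_contra hQ
  obtain ⟨p, q, hpq, hne⟩ := exists_trace_mul_separating hQ
  have hpair (x : Matrix ι ι K) (y : Matrix κ κ K) :
      trace (p * (x * P.1 + P.1 * y)) + trace (q * (x * P.2 + P.2 * y)) = 0 :=
    hpq (x * P.1 + P.1 * y, x * P.2 + P.2 * y) ⟨(x, y), rfl⟩
  have hleft : P.1 * p + P.2 * q = 0 := by
    refine ext_iff_trace_mul_right.2 fun x => ?_
    have := hpair x 0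
    simp only [Matrix.mul_zero, add_zero] at this
    rw [Matrix.add_mul, trace_add, Matrix.mul_assoc, Matrix.mul_assoc, trace_mul_comm P.1,
      trace_mul_comm P.2, Matrix.mul_assoc, Matrix.mul_assoc, this, Matrix.zero_mul, trace_zero]
  have hright : p * P.1 + q * P.2 = 0 := by
    refine ext_iff_trace_mul_right.2 fun y => ?_
    have := hpair 0 y
    simp only [Matrix.zero_mul, zero_add] at this
    rw [Matrix.add_mul, trace_add, Matrix.mul_assoc, Matrix.mul_assoc, this, Matrix.zero_mul,
      trace_zero]
  obtain ⟨rfl, rfl⟩ := hP p q hright hleft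
  simp at hne

theorem trace_mul_eq_zero_of_transpose_eq_neg [NeZero (2 : K)] {p M : Matrix ι ι K}
    (hp : pᵀ = p) (hM : Mᵀ = -M) : trace (p * M) = 0 := by
  have h : trace (p * M) = -trace (p * M) := by
    conv_lhs => rw [← trace_transpose, transpose_mul, hp, hM, Matrix.neg_mul, trace_neg,
      trace_mul_comm]
  have h2 : 2 * trace (p * M) = 0 := by linear_combination h
  exact (mul_eq_zero.1 h2).resolve_left two_ne_zero

theorem trace_mul_mul_sub_transpose (p : Matrix ι ι K) (M : Matrix ι κ K) (z : Matrix κ ι K) :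
    trace (p * (M * z - (M * z)ᵀ)) = trace ((p - pᵀ) * M * z) := by
  rw [Matrix.mul_sub, trace_sub, ← trace_transpose (p * (M * z)ᵀ), transpose_mul,
    transpose_transpose, trace_mul_comm (M * z), ← trace_sub, ← Matrix.sub_mul, Matrix.mul_assoc]

theorem exists_eq_mul_sub_transpose [NeZero (2 : K)]
    {P : Matrix ι κ K × Matrix ι κ K}
    (hP : ∀ p q : Matrix ι ι K, pᵀ = -p → qᵀ = -q → p * P.1 + q * P.2 = 0 → p = 0 ∧ q = 0)
    {Q : Matrix ι ι K × Matrix ι ι K} (hQ₁ : Q.1ᵀ = -Q.1) (hQ₂ : Q.2ᵀ = -Q.2) :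
    ∃ z : Matrix κ ι K, Q.1 = P.1 * z - (P.1 * z)ᵀ ∧ Q.2 = P.2 * z - (P.2 * z)ᵀ := by
  let skewPart : Matrix κ ι K →ₗ[K] Matrix ι ι K × Matrix ι ι K :=
    { toFun := fun z => (P.1 * z - (P.1 * z)ᵀ, P.2 * z - (P.2 * z)ᵀ)
      map_add' := fun z w => by
        simp only [Matrix.mul_add, transpose_add, Prod.mk_add_mk, add_sub_add_comm]
      map_smul' := fun c z => by
        simp only [Matrix.mul_smul, transpose_smul, smul_sub, Prod.smul_mk, RingHom.id_apply] }
  suffices Q ∈ LinearMap.range skewPart by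
    obtain ⟨z, hz⟩ := this
    exact ⟨z, (congrArg Prod.fst hz).symm, (congrArg Prod.snd hz).symm⟩
  by_contra hQ
  obtain ⟨p, q, hpq, hne⟩ := exists_trace_mul_separating hQ
  have hskew : (p - pᵀ) * P.1 + (q - qᵀ) * P.2 = 0 := by
    refine ext_iff_trace_mul_right.2 fun z => ?_
    rw [Matrix.add_mul, trace_add, ← trace_mul_mul_sub_transpose, ← trace_mul_mul_sub_transpose,
      Matrix.zero_mul, trace_zero]
    exact hpq (P.1 * z - (P.1 * z)ᵀ, P.2 * z - (P.2 * z)ᵀ) ⟨z, rfl⟩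
  obtain ⟨hp, hq⟩ := hP _ _ (by simp) (by simp) hskew
  exact hne (by rw [trace_mul_eq_zero_of_transpose_eq_neg (sub_eq_zero.1 hp).symm hQ₁,
    trace_mul_eq_zero_of_transpose_eq_neg (sub_eq_zero.1 hq).symm hQ₂, add_zero])

end TraceDuality

section KroneckerPencil

variable {α : Type*} [DecidableEq α]

/-- The rectangular pencil `⨁ₐ (F_{k a} - λ G_{k a})`, as the pair of its two coefficients. -/
noncomputable def kroneckerPencil (k : α → ℕ) :
    Matrix (Σ a, Fin (k a)) (Σ a, Fin (k a + 1)) ℂ ×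
      Matrix (Σ a, Fin (k a)) (Σ a, Fin (k a + 1)) ℂ :=
  (blockDiagonal' fun a => Fmat (k a), blockDiagonal' fun a => Gmat (k a))

variable [Fintype α]

theorem mul_blockDiagonal'_apply {R l : Type*} {m n : α → Type*} [NonUnitalNonAssocSemiring R]
    [∀ a, Fintype (m a)] (p : Matrix l (Σ a, m a) R) (M : ∀ a, Matrix (m a) (n a) R)
    (y : l) (a : α) (c : n a) :
    (p * blockDiagonal' M) y ⟨a, c⟩ = ∑ i, p y ⟨a, i⟩ * M a i c := by
  rw [mul_apply, Fintype.sum_sigma, Fintype.sum_eq_single a]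
  · simp only [blockDiagonal'_apply_eq]
  · intro b hb
    simp only [blockDiagonal'_apply_ne _ _ _ hb, mul_zero, Finset.sum_const_zero]

theorem blockDiagonal'_mul_apply {R l : Type*} {m n : α → Type*} [NonUnitalNonAssocSemiring R]
    [∀ a, Fintype (n a)] (M : ∀ a, Matrix (m a) (n a) R) (u : Matrix (Σ a, n a) l R)
    (a : α) (i : m a) (y : l) :
    (blockDiagonal' M * u) ⟨a, i⟩ y = ∑ c, M a i c * u ⟨a, c⟩ y := by
  rw [mul_apply, Fintype.sum_sigma, Fintype.sum_eq_single a]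
  · simp only [blockDiagonal'_apply_eq]
  · intro b hb
    simp only [blockDiagonal'_apply_ne _ _ _ hb.symm, zero_mul, Finset.sum_const_zero]

namespace kroneckerPencil

variable {k : α → ℕ} {β : Type*}

theorem fst_mul_apply (u : Matrix (Σ a, Fin (k a + 1)) β ℂ) (a : α)
    (i : Fin (k a)) (y : β) : ((kroneckerPencil k).1 * u) ⟨a, i⟩ y = u ⟨a, i.succ⟩ y := by
  simp [kroneckerPencil, blockDiagonal'_mul_apply, Fmat, ← Fin.val_succ, ← Fin.ext_iff]

theorem snd_mul_apply (u : Matrix (Σ a, Fin (k a + 1)) β ℂ) (a : α)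
    (i : Fin (k a)) (y : β) : ((kroneckerPencil k).2 * u) ⟨a, i⟩ y = u ⟨a, i.castSucc⟩ y := by
  have hval (c : Fin (k a + 1)) : (c : ℕ) = i ↔ c = i.castSucc := by simp [Fin.ext_iff]
  simp [kroneckerPencil, blockDiagonal'_mul_apply, Gmat, hval]

theorem mul_fst_apply_zero (p : Matrix β (Σ a, Fin (k a)) ℂ) (y : β) (a : α) :
    (p * (kroneckerPencil k).1) y ⟨a, 0⟩ = 0 := by
  simp [kroneckerPencil, mul_blockDiagonal'_apply, Fmat]

theorem mul_fst_apply_succ (p : Matrix β (Σ a, Fin (k a)) ℂ) (y : β) (a : α)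
    (i : Fin (k a)) : (p * (kroneckerPencil k).1) y ⟨a, i.succ⟩ = p y ⟨a, i⟩ := by
  simp [kroneckerPencil, mul_blockDiagonal'_apply, Fmat, ← Fin.ext_iff]

theorem mul_snd_apply_castSucc (p : Matrix β (Σ a, Fin (k a)) ℂ) (y : β) (a : α)
    (i : Fin (k a)) : (p * (kroneckerPencil k).2) y ⟨a, i.castSucc⟩ = p y ⟨a, i⟩ := by
  simp [kroneckerPencil, mul_blockDiagonal'_apply, Gmat, ← Fin.ext_iff]

theorem mul_snd_apply_last (p : Matrix β (Σ a, Fin (k a)) ℂ) (y : β) (a : α) :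
    (p * (kroneckerPencil k).2) y ⟨a, Fin.last (k a)⟩ = 0 := by
  simp [kroneckerPencil, mul_blockDiagonal'_apply, Gmat, Fin.val_last, (Fin.is_lt _).ne']

section LeftAnnihilator

variable {p q : Matrix β (Σ a, Fin (k a)) ℂ}

theorem snd_eq_zero_of_val_eq_zero
    (h : p * (kroneckerPencil k).1 + q * (kroneckerPencil k).2 = 0) (y : β) {a : α}
    {i : Fin (k a)} (hi : (i : ℕ) = 0) : q y ⟨a, i⟩ = 0 := by
  have hcol := congrFun₂ h y ⟨a, 0⟩
  have hzero : (0 : Fin (k a + 1)) = i.castSucc := Fin.ext hi.symm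
  rwa [Matrix.add_apply, mul_fst_apply_zero, hzero,
    mul_snd_apply_castSucc, zero_add] at hcol

theorem fst_eq_zero_of_val_add_one_eq
    (h : p * (kroneckerPencil k).1 + q * (kroneckerPencil k).2 = 0) (y : β) {a : α}
    {i : Fin (k a)} (hi : (i : ℕ) + 1 = k a) : p y ⟨a, i⟩ = 0 := by
  have hcol := congrFun₂ h y ⟨a, Fin.last (k a)⟩
  have hlast : Fin.last (k a) = i.succ := Fin.ext hi.symm
  rwa [Matrix.add_apply, mul_snd_apply_last, hlast,
    mul_fst_apply_succ, add_zero] at hcol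

theorem snd_eq_neg_fst_of_val_eq_add_one
    (h : p * (kroneckerPencil k).1 + q * (kroneckerPencil k).2 = 0) (y : β) {a : α}
    {i j : Fin (k a)} (hij : (j : ℕ) = i + 1) : q y ⟨a, j⟩ = -p y ⟨a, i⟩ := by
  have hcol := congrFun₂ h y ⟨a, i.succ⟩
  have hsucc : i.succ = j.castSucc := Fin.ext hij.symm
  rw [Matrix.add_apply, mul_fst_apply_succ, hsucc,
    mul_snd_apply_castSucc] at hcol
  exact (neg_eq_of_add_eq_zero_right hcol).symm

theorem fst_eq_zero_of_snd_eq_zero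
    (h : p * (kroneckerPencil k).1 + q * (kroneckerPencil k).2 = 0) (hq : q = 0) : p = 0 := by
  ext y ⟨a, i⟩
  obtain hi | hi : (i : ℕ) + 1 = k a ∨ (i : ℕ) + 1 < k a := by omega
  · exact fst_eq_zero_of_val_add_one_eq h y hi
  · have := snd_eq_neg_fst_of_val_eq_add_one h y (i := i) (j := ⟨i + 1, hi⟩) rfl
    rw [hq] at this
    exact neg_eq_zero.1 this.symm

end LeftAnnihilator

theorem eq_zero_of_transpose_eq_neg_of_mul_add_mul_eq_zero
    {p q : Matrix (Σ a, Fin (k a)) (Σ a, Fin (k a)) ℂ} (hp : pᵀ = -p) (hq : qᵀ = -q)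
    (h : p * (kroneckerPencil k).1 + q * (kroneckerPencil k).2 = 0) : p = 0 ∧ q = 0 := by
  have hp' (x y) : p x y = -p y x := congrFun₂ hp y x
  have hq' (x y) : q x y = -q y x := congrFun₂ hq y x
  have hzero (n : ℕ) (a : α) (i : Fin (k a)) (hi : (i : ℕ) = n) (y) : q y ⟨a, i⟩ = 0 := by
    induction n generalizing a i y with
    | zero => exact snd_eq_zero_of_val_eq_zero h y hi
    | succ n ih =>
      obtain ⟨b, j⟩ := y
      let i' : Fin (k a) := ⟨n, by omega⟩
      rw [snd_eq_neg_fst_of_val_eq_add_one h _ (i := i') hi, ← hp' ⟨a, i'⟩]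
      obtain hj | hj : (j : ℕ) + 1 = k b ∨ (j : ℕ) + 1 < k b := by omega
      · exact fst_eq_zero_of_val_add_one_eq h _ hj
      · have hshift := snd_eq_neg_fst_of_val_eq_add_one h ⟨a, i'⟩ (i := j) (j := ⟨j + 1, hj⟩) rfl
        rwa [hq', ih a i' rfl, neg_zero, eq_comm, neg_eq_zero] at hshift
  have hq0 : q = 0 := by
    ext y ⟨a, i⟩
    exact hzero i a i rfl y
  exact ⟨fst_eq_zero_of_snd_eq_zero h hq0, hq0⟩

section TwoSidedAnnihilator

variable {u v : Matrix (Σ a, Fin (k a + 1)) (Σ a, Fin (k a)) ℂ}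

theorem snd_castSucc_eq_neg_fst_succ
    (hright : (kroneckerPencil k).1 * u + (kroneckerPencil k).2 * v = 0)
    {b : α} (c : Fin (k b)) (x : Σ a, Fin (k a)) :
    v ⟨b, c.castSucc⟩ x = -u ⟨b, c.succ⟩ x := by
  have hrow := congrFun₂ hright ⟨b, c⟩ x
  rw [Matrix.add_apply, fst_mul_apply, snd_mul_apply] at hrow
  exact (neg_eq_of_add_eq_zero_right hrow).symm

theorem snd_eq_along_diagonal
    (hleft : u * (kroneckerPencil k).1 + v * (kroneckerPencil k).2 = 0)
    (hright : (kroneckerPencil k).1 * u + (kroneckerPencil k).2 * v = 0)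
    {a b : α} (c : Fin (k b)) {i j : Fin (k a)} (hij : (j : ℕ) = i + 1) :
    v ⟨b, c.succ⟩ ⟨a, j⟩ = v ⟨b, c.castSucc⟩ ⟨a, i⟩ := by
  rw [snd_castSucc_eq_neg_fst_succ hright, snd_eq_neg_fst_of_val_eq_add_one hleft _ hij]

theorem snd_eq_zero_of_val_le
    (hleft : u * (kroneckerPencil k).1 + v * (kroneckerPencil k).2 = 0)
    (hright : (kroneckerPencil k).1 * u + (kroneckerPencil k).2 * v = 0)
    {a b : α} {i : Fin (k a)} {c : Fin (k b + 1)} (hic : (i : ℕ) ≤ c) :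
    v ⟨b, c⟩ ⟨a, i⟩ = 0 := by
  obtain ⟨n, hi⟩ := i
  change n ≤ c at hic
  induction n generalizing c with
  | zero => exact snd_eq_zero_of_val_eq_zero hleft _ rfl
  | succ n ih =>
    obtain ⟨c, rfl⟩ := Fin.exists_succ_eq_of_ne_zero (x := c) (by rintro rfl; simp at hic)
    rw [snd_eq_along_diagonal hleft hright c (i := ⟨n, by omega⟩) rfl]
    exact ih _ (by simpa using hic)

theorem snd_eq_zero_of_add_lt
    (hleft : u * (kroneckerPencil k).1 + v * (kroneckerPencil k).2 = 0)
    (hright : (kroneckerPencil k).1 * u + (kroneckerPencil k).2 * v = 0)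
    {a b : α} {i : Fin (k a)} {c : Fin (k b)} {n : ℕ} (hi : (i : ℕ) + 1 + n = k a)
    (hc : (c : ℕ) + n < k b) : v ⟨b, c.castSucc⟩ ⟨a, i⟩ = 0 := by
  induction n generalizing i c with
  | zero =>
    rw [snd_castSucc_eq_neg_fst_succ hright, fst_eq_zero_of_val_add_one_eq hleft _ hi, neg_zero]
  | succ n ih =>
    rw [← snd_eq_along_diagonal hleft hright c (j := ⟨i + 1, by omega⟩) rfl]
    exact ih (c := ⟨c + 1, by omega⟩) (by simp only; omega) (by simp only; omega)

-- `v` is constant along the diagonals of each block, and every diagonal contains an entry where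
-- `v` vanishes: in the first column below the main diagonal, in the last column above it.
theorem eq_zero_of_mul_add_mul_eq_zero (hk : ∀ a b, k a ≤ k b + 1)
    (hleft : u * (kroneckerPencil k).1 + v * (kroneckerPencil k).2 = 0)
    (hright : (kroneckerPencil k).1 * u + (kroneckerPencil k).2 * v = 0) : u = 0 ∧ v = 0 := by
  have hv : v = 0 := by
    ext ⟨b, c⟩ ⟨a, i⟩
    obtain hic | hci := le_or_gt (i : ℕ) c
    · exact snd_eq_zero_of_val_le hleft hright hic
    · have := hk a b
      exact snd_eq_zero_of_add_lt hleft hright (c := ⟨c, by omega⟩) (n := k a - (i + 1))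
        (by omega) (by simp only; omega)
  exact ⟨fst_eq_zero_of_snd_eq_zero hleft hv, hv⟩

end TwoSidedAnnihilator

theorem dense_setOf_strictlyEquivalent (hk : ∀ a b, k a ≤ k b + 1) :
    Dense {P | StrictlyEquivalent (kroneckerPencil k) P} :=
  dense_setOf_strictlyEquivalent_of_surjective <| strictEquivalenceDeriv_surjective fun _ _ =>
    eq_zero_of_mul_add_mul_eq_zero hk

end kroneckerPencil

end KroneckerPencil

section PencilCongruence

variable {R n : Type*} [CommRing R] [Fintype n] [DecidableEq n]

/-- Congruence of the square pencils `P.1 - λ P.2` and `Q.1 - λ Q.2`, each given as the pair of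
its two coefficients. -/
def PencilCongruent (P Q : Matrix n n R × Matrix n n R) : Prop :=
  ∃ S : Matrix n n R, IsUnit S ∧ Q.1 = Sᵀ * P.1 * S ∧ Q.2 = Sᵀ * P.2 * S

namespace PencilCongruent

theorem trans {P Q T : Matrix n n R × Matrix n n R} (hPQ : PencilCongruent P Q)
    (hQT : PencilCongruent Q T) : PencilCongruent P T := by
  obtain ⟨S, hS, hQ₁, hQ₂⟩ := hPQ
  obtain ⟨S', hS', hT₁, hT₂⟩ := hQT
  exact ⟨S * S', hS.mul hS', by simp only [hT₁, hQ₁, transpose_mul, Matrix.mul_assoc],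
    by simp only [hT₂, hQ₂, transpose_mul, Matrix.mul_assoc]⟩

theorem symm {P Q : Matrix n n R × Matrix n n R} (h : PencilCongruent P Q) :
    PencilCongruent Q P := by
  obtain ⟨_, ⟨S, rfl⟩, hQ₁, hQ₂⟩ := h
  let S' : Matrix n n R := (S⁻¹ : (Matrix n n R)ˣ)
  have hcancel (M : Matrix n n R) : M = S'ᵀ * (S.valᵀ * M * S.val) * S' := by
    have hSS' : S.val * S' = 1 := S.mul_inv
    calc M = (S.val * S')ᵀ * M * (S.val * S') := by simp [hSS']
      _ = S'ᵀ * (S.valᵀ * M * S.val) * S' := by simp only [transpose_mul, Matrix.mul_assoc]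
  exact ⟨S', S⁻¹.isUnit, hQ₁ ▸ hcancel P.1, hQ₂ ▸ hcancel P.2⟩

theorem submatrix {m : Type*} [Fintype m] [DecidableEq m] {P Q : Matrix n n R × Matrix n n R}
    (h : PencilCongruent P Q) (e : m ≃ n) :
    PencilCongruent (P.1.submatrix e e, P.2.submatrix e e)
      (Q.1.submatrix e e, Q.2.submatrix e e) := by
  obtain ⟨S, hS, hQ₁, hQ₂⟩ := h
  refine ⟨S.submatrix e e, (isUnit_submatrix_equiv e e).2 hS, ?_, ?_⟩ <;>
    simp only [hQ₁, hQ₂, transpose_submatrix, submatrix_mul_equiv]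

theorem mem_closure [TopologicalSpace R] [IsTopologicalRing R] {W P Q : Matrix n n R × Matrix n n R}
    (hPQ : PencilCongruent P Q) (hP : P ∈ closure {T | PencilCongruent W T}) :
    Q ∈ closure {T | PencilCongruent W T} := by
  obtain ⟨S, hS, hQ₁, hQ₂⟩ := hPQ
  have hcont : Continuous fun T : Matrix n n R × Matrix n n R =>
      (Sᵀ * T.1 * S, Sᵀ * T.2 * S) := by fun_prop
  have hQ : Q = (Sᵀ * P.1 * S, Sᵀ * P.2 * S) := Prod.ext hQ₁ hQ₂
  rw [hQ]
  exact map_mem_closure (f := fun T : Matrix n n R × Matrix n n R => (Sᵀ * T.1 * S, Sᵀ * T.2 * S))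
    hcont hP fun T (hT : PencilCongruent W T) => hT.trans ⟨S, hS, rfl, rfl⟩

theorem submatrix_mem_closure [TopologicalSpace R] {m : Type*} [Fintype m] [DecidableEq m]
    {W P : Matrix n n R × Matrix n n R} (hP : P ∈ closure {T | PencilCongruent W T}) (e : m ≃ n) :
    (P.1.submatrix e e, P.2.submatrix e e) ∈
      closure {T | PencilCongruent (W.1.submatrix e e, W.2.submatrix e e) T} :=
  map_mem_closure
    (f := fun T : Matrix n n R × Matrix n n R => (T.1.submatrix e e, T.2.submatrix e e))
    (by fun_prop) hP fun T (hT : PencilCongruent W T) => hT.submatrix e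

end PencilCongruent

end PencilCongruence

section SkewPencilsOfRankLE

variable {K n : Type*} [Field K] [Fintype n]

/-- The skew-symmetric pencils whose matrix `A - μ B` has rank at most `k` for every scalar `μ`. -/
def skewPencilsOfRankLE (K n : Type*) [Field K] [Fintype n] (k : ℕ) :
    Set (Matrix n n K × Matrix n n K) :=
  {P | P.1ᵀ = -P.1 ∧ P.2ᵀ = -P.2 ∧ ∀ μ : K, (P.1 - μ • P.2).rank ≤ k}

theorem isClosed_skewPencilsOfRankLE [TopologicalSpace K] [IsTopologicalRing K] [T2Space K]
    (k : ℕ) : IsClosed (skewPencilsOfRankLE K n k) := by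
  have hrank : IsClosed {P : Matrix n n K × Matrix n n K | ∀ μ : K, (P.1 - μ • P.2).rank ≤ k} := by
    simp only [Set.ofPred_forall]
    exact isClosed_iInter fun μ => (isClosed_setOf_rank_le k).preimage
      (f := fun P : Matrix n n K × Matrix n n K => P.1 - μ • P.2) (by fun_prop)
  exact (isClosed_eq (by fun_prop) (by fun_prop)).inter
    ((isClosed_eq (by fun_prop) (by fun_prop)).inter hrank)

theorem transpose_mul_mul_eq_neg {R m : Type*} [CommRing R] {A : Matrix n n R}
    (hA : Aᵀ = -A) (S : Matrix n m R) : (Sᵀ * A * S)ᵀ = -(Sᵀ * A * S) := by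
  simp only [transpose_mul, transpose_transpose, hA, Matrix.neg_mul, Matrix.mul_neg,
    Matrix.mul_assoc]

theorem PencilCongruent.mem_skewPencilsOfRankLE [DecidableEq n] {P Q : Matrix n n K × Matrix n n K}
    {k : ℕ} (h : PencilCongruent P Q) (hP : P ∈ skewPencilsOfRankLE K n k) :
    Q ∈ skewPencilsOfRankLE K n k := by
  obtain ⟨S, -, hQ₁, hQ₂⟩ := h
  obtain ⟨hP₁, hP₂, hrank⟩ := hP
  refine ⟨hQ₁ ▸ transpose_mul_mul_eq_neg hP₁ S, hQ₂ ▸ transpose_mul_mul_eq_neg hP₂ S,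
    fun μ => ?_⟩
  have hpencil : Q.1 - μ • Q.2 = Sᵀ * (P.1 - μ • P.2) * S := by
    rw [hQ₁, hQ₂, Matrix.mul_sub, Matrix.sub_mul, Matrix.mul_smul, Matrix.smul_mul]
  rw [hpencil]
  exact (rank_mul_le_left _ _).trans ((rank_mul_le_right _ _).trans (hrank μ))

theorem submatrix_mem_skewPencilsOfRankLE {m : Type*} [Fintype m]
    {P : Matrix n n K × Matrix n n K} {k : ℕ} (hP : P ∈ skewPencilsOfRankLE K n k) (e : m ≃ n) :
    (P.1.submatrix e e, P.2.submatrix e e) ∈ skewPencilsOfRankLE K m k := by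
  obtain ⟨hP₁, hP₂, hrank⟩ := hP
  refine ⟨?_, ?_, fun μ => ?_⟩
  · rw [transpose_submatrix, hP₁]; rfl
  · rw [transpose_submatrix, hP₂]; rfl
  · exact (rank_submatrix (P.1 - μ • P.2) e e).le.trans (hrank μ)

theorem skewPencilsOfRankLE_eq_closure_submatrix {m : Type*} [Fintype m] [DecidableEq m]
    [DecidableEq n] [TopologicalSpace K] {W : Matrix n n K × Matrix n n K} {k : ℕ}
    (hW : skewPencilsOfRankLE K n k = closure {P | PencilCongruent W P}) (e : m ≃ n) :
    skewPencilsOfRankLE K m k =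
      closure {P | PencilCongruent (W.1.submatrix e e, W.2.submatrix e e) P} := by
  refine Set.Subset.antisymm (fun P hP => ?_) fun P hP => ?_
  · have hPn := submatrix_mem_skewPencilsOfRankLE hP e.symm
    rw [hW] at hPn
    simpa using PencilCongruent.submatrix_mem_closure hPn e
  · have hPn := PencilCongruent.submatrix_mem_closure hP e.symm
    simp only [submatrix_submatrix, Equiv.self_comp_symm, submatrix_id_id, Prod.mk.eta] at hPn
    rw [← hW] at hPn
    simpa using submatrix_mem_skewPencilsOfRankLE hPn e

end SkewPencilsOfRankLE

section SkewBlockPencil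

/-- The pencil with coefficients `[[Kᵢ, Cᵢ], [-Cᵢᵀ, 0]]`, for which the span of the basis vectors
indexed by `κ` is isotropic. It is skew-symmetric as soon as both `Kᵢ` are. -/
def skewBlockPencil {R ι κ : Type*} [CommRing R] (K : Matrix ι ι R × Matrix ι ι R)
    (C : Matrix ι κ R × Matrix ι κ R) :
    Matrix (ι ⊕ κ) (ι ⊕ κ) R × Matrix (ι ⊕ κ) (ι ⊕ κ) R :=
  (fromBlocks K.1 C.1 (-C.1ᵀ) 0, fromBlocks K.2 C.2 (-C.2ᵀ) 0)

theorem eq_fromBlocks_of_transpose_eq_neg {R ι κ : Type*} [Ring R]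
    {M : Matrix (ι ⊕ κ) (ι ⊕ κ) R} (hM : Mᵀ = -M) (hM₂₂ : M.toBlocks₂₂ = 0) :
    M = fromBlocks M.toBlocks₁₁ M.toBlocks₁₂ (-M.toBlocks₁₂ᵀ) 0 := by
  have hM₂₁ : -M.toBlocks₁₂ᵀ = M.toBlocks₂₁ := by
    ext i j
    exact neg_eq_iff_eq_neg.2 (congrFun₂ hM (Sum.inr i) (Sum.inl j))
  rw [hM₂₁, ← hM₂₂, fromBlocks_toBlocks]

theorem rank_fromBlocks_zero_neg_transpose_zero_le {K ι κ : Type*} [Field K] [Fintype ι]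
    [Fintype κ] (C : Matrix ι κ K) :
    (fromBlocks 0 C (-Cᵀ) 0 : Matrix (ι ⊕ κ) (ι ⊕ κ) K).rank ≤ 2 * Fintype.card ι := by
  classical
  have hfactor : (fromBlocks 0 C (-Cᵀ) 0 : Matrix (ι ⊕ κ) (ι ⊕ κ) K) =
      (fromBlocks 1 0 0 (-Cᵀ) : Matrix (ι ⊕ κ) (ι ⊕ ι) K) *
        (fromBlocks 0 C 1 0 : Matrix (ι ⊕ ι) (ι ⊕ κ) K) := by
    simp [fromBlocks_multiply]
  calc (fromBlocks 0 C (-Cᵀ) 0 : Matrix (ι ⊕ κ) (ι ⊕ κ) K).rank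
      ≤ (fromBlocks 1 0 0 (-Cᵀ) : Matrix (ι ⊕ κ) (ι ⊕ ι) K).rank :=
        hfactor ▸ rank_mul_le_left _ _
    _ ≤ Fintype.card (ι ⊕ ι) := rank_le_card_width _
    _ = 2 * Fintype.card ι := by rw [Fintype.card_sum, two_mul]

theorem skewBlockPencil_zero_mem_skewPencilsOfRankLE {K ι κ : Type*} [Field K] [Fintype ι]
    [Fintype κ] (C : Matrix ι κ K × Matrix ι κ K) :
    skewBlockPencil 0 C ∈ skewPencilsOfRankLE K (ι ⊕ κ) (2 * Fintype.card ι) := by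
  refine ⟨?_, ?_, fun μ => ?_⟩
  · simp [skewBlockPencil, fromBlocks_transpose, fromBlocks_neg]
  · simp [skewBlockPencil, fromBlocks_transpose, fromBlocks_neg]
  · have hpencil : (skewBlockPencil 0 C).1 - μ • (skewBlockPencil 0 C).2 =
        fromBlocks 0 (C.1 - μ • C.2) (-(C.1 - μ • C.2)ᵀ) 0 := by
      simp [skewBlockPencil, fromBlocks_smul, sub_eq_add_neg, fromBlocks_neg, fromBlocks_add,
        add_comm]
    rw [hpencil]
    exact rank_fromBlocks_zero_neg_transpose_zero_le _

variable {R ι κ : Type*} [CommRing R] [Fintype ι] [Fintype κ] [DecidableEq ι] [DecidableEq κ]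

theorem StrictlyEquivalent.exists_pencilCongruent_skewBlockPencil
    {C C' : Matrix ι κ R × Matrix ι κ R} (hC : StrictlyEquivalent C C')
    {K : Matrix ι ι R × Matrix ι ι R} (hK₁ : K.1ᵀ = -K.1) (hK₂ : K.2ᵀ = -K.2) :
    ∃ K' : Matrix ι ι R × Matrix ι ι R, K'.1ᵀ = -K'.1 ∧ K'.2ᵀ = -K'.2 ∧
      PencilCongruent (skewBlockPencil K C) (skewBlockPencil K' C') := by
  obtain ⟨X, Y, hX, hY, hC₁, hC₂⟩ := hC
  have hunit : IsUnit (fromBlocks Xᵀ 0 0 Y) :=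
    isUnit_fromBlocks_zero₁₂.2 ⟨isUnit_transpose X |>.2 hX, hY⟩
  have hcongr (A : Matrix ι ι R) (B : Matrix ι κ R) :
      fromBlocks (Xᵀᵀ * A * Xᵀ) (X * B * Y) (-(X * B * Y)ᵀ) 0 =
        (fromBlocks Xᵀ 0 0 Y)ᵀ * fromBlocks A B (-Bᵀ) 0 * fromBlocks Xᵀ 0 0 Y := by
    simp [fromBlocks_transpose, fromBlocks_multiply, Matrix.mul_assoc]
  refine ⟨(Xᵀᵀ * K.1 * Xᵀ, Xᵀᵀ * K.2 * Xᵀ), transpose_mul_mul_eq_neg hK₁ _,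
    transpose_mul_mul_eq_neg hK₂ _, _, hunit, ?_, ?_⟩
  · simpa only [skewBlockPencil, hC₁] using hcongr K.1 C.1
  · simpa only [skewBlockPencil, hC₂] using hcongr K.2 C.2

theorem pencilCongruent_skewBlockPencil_add_mul_sub_transpose (K : Matrix ι ι R × Matrix ι ι R)
    (C : Matrix ι κ R × Matrix ι κ R) (z : Matrix κ ι R) :
    PencilCongruent (skewBlockPencil K C) (skewBlockPencil
      (K.1 + (C.1 * z - (C.1 * z)ᵀ), K.2 + (C.2 * z - (C.2 * z)ᵀ)) C) := by
  have hcongr (A : Matrix ι ι R) (B : Matrix ι κ R) :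
      fromBlocks (A + (B * z - (B * z)ᵀ)) B (-Bᵀ) 0 =
        (fromBlocks 1 0 z 1)ᵀ * fromBlocks A B (-Bᵀ) 0 * fromBlocks 1 0 z 1 := by
    simp [fromBlocks_transpose, fromBlocks_multiply]
    abel
  exact ⟨fromBlocks 1 0 z 1, isUnit_fromBlocks_zero₁₂.2 ⟨isUnit_one, isUnit_one⟩,
    hcongr K.1 C.1, hcongr K.2 C.2⟩

theorem pencilCongruent_skewBlockPencil_zero {F : Type*} [Field F] [NeZero (2 : F)]
    {C : Matrix ι κ F × Matrix ι κ F}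
    (hC : ∀ p q : Matrix ι ι F, pᵀ = -p → qᵀ = -q → p * C.1 + q * C.2 = 0 → p = 0 ∧ q = 0)
    {K : Matrix ι ι F × Matrix ι ι F} (hK₁ : K.1ᵀ = -K.1) (hK₂ : K.2ᵀ = -K.2) :
    PencilCongruent (skewBlockPencil 0 C) (skewBlockPencil K C) := by
  obtain ⟨z, hz₁, hz₂⟩ := exists_eq_mul_sub_transpose hC hK₁ hK₂
  have hK : K = (0 + (C.1 * z - (C.1 * z)ᵀ), 0 + (C.2 * z - (C.2 * z)ᵀ)) := by
    simp only [zero_add, ← hz₁, ← hz₂]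
  rw [hK]
  exact pencilCongruent_skewBlockPencil_add_mul_sub_transpose 0 C z

theorem skewBlockPencil_mem_closure {F : Type*} [Field F] [NeZero (2 : F)]
    [TopologicalSpace F] [IsTopologicalRing F] {W : Matrix ι κ F × Matrix ι κ F}
    (hdense : Dense {C | StrictlyEquivalent W C})
    (hW : ∀ p q : Matrix ι ι F, pᵀ = -p → qᵀ = -q → p * W.1 + q * W.2 = 0 → p = 0 ∧ q = 0)
    {K : Matrix ι ι F × Matrix ι ι F} (hK₁ : K.1ᵀ = -K.1) (hK₂ : K.2ᵀ = -K.2)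
    (C : Matrix ι κ F × Matrix ι κ F) :
    skewBlockPencil K C ∈ closure {P | PencilCongruent (skewBlockPencil 0 W) P} := by
  have hcont : Continuous fun C : Matrix ι κ F × Matrix ι κ F => skewBlockPencil K C := by
    unfold skewBlockPencil
    fun_prop
  refine map_mem_closure hcont (hdense C) fun C' (hC' : StrictlyEquivalent W C') => ?_
  obtain ⟨K', hK'₁, hK'₂, hcongr⟩ :=
    hC'.symm.exists_pencilCongruent_skewBlockPencil hK₁ hK₂
  exact (pencilCongruent_skewBlockPencil_zero hW hK'₁ hK'₂).trans hcongr.symm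

end SkewBlockPencil

section IsotropicBlockForm

open Module

theorem exists_basis_sum_of_card_le_finrank {K V ι κ : Type*} [Field K] [AddCommGroup V]
    [Module K V] [FiniteDimensional K V] [Fintype ι] [Fintype κ]
    (hV : finrank K V = Fintype.card ι + Fintype.card κ) {L : Submodule K V}
    (hL : Fintype.card κ ≤ finrank K L) :
    ∃ b : Basis (ι ⊕ κ) K V, ∀ c, b (Sum.inr c) ∈ L := by
  obtain ⟨f, hf⟩ := exists_linearIndependent_of_le_finrank hL
  let g : κ → V := fun c => f (Fintype.equivFin κ c)
  have hg : LinearIndependent K g :=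
    (hf.map' L.subtype L.ker_subtype).comp _ (Fintype.equivFin κ).injective
  let U : Submodule K V := Submodule.span K (Set.range g)
  have hquot : finrank K (V ⧸ U) = Fintype.card ι := by
    have hU : finrank K U = Fintype.card κ := finrank_span_eq_card hg
    have := U.finrank_quotient_add_finrank
    omega
  let bQuot : Basis ι K (V ⧸ U) :=
    (finBasisOfFinrankEq K (V ⧸ U) hquot).reindex (Fintype.equivFin ι).symm
  refine ⟨((Basis.span hg).sumQuot bQuot).reindex (Equiv.sumComm κ ι), fun c => ?_⟩
  simp [Basis.span_apply, g]

variable {K n : Type*} [Field K] [Fintype n]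

theorem toBilin'_isAlt_of_transpose_eq_neg [NeZero (2 : K)] [DecidableEq n] {A : Matrix n n K}
    (hA : Aᵀ = -A) : (toBilin' A).IsAlt := by
  intro x
  rw [toBilin'_apply']
  have h : x ⬝ᵥ A *ᵥ x = -(x ⬝ᵥ A *ᵥ x) := by
    conv_lhs => rw [dotProduct_mulVec, ← mulVec_transpose, hA, dotProduct_comm, neg_mulVec,
      dotProduct_neg]
  have h2 : 2 * (x ⬝ᵥ A *ᵥ x) = 0 := by linear_combination h
  exact (mul_eq_zero.1 h2).resolve_left two_ne_zero

theorem finrank_range_toBilin' [DecidableEq n] (A : Matrix n n K) :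
    finrank K (LinearMap.range (toBilin' A)) = A.rank := by
  have hcomp : toBilin' A = (dotProductEquiv K n).toLinearMap ∘ₗ Aᵀ.mulVecLin := by
    ext x y
    simp [toBilin'_apply']
  rw [hcomp, LinearMap.range_comp, LinearEquiv.finrank_map_eq, ← rank_transpose]
  rfl

theorem exists_pencilCongruent_skewBlockPencil {ι κ : Type*} [IsAlgClosed K] [NeZero (2 : K)]
    [Fintype ι] [Fintype κ] [DecidableEq ι] [DecidableEq κ]
    {P : Matrix (ι ⊕ κ) (ι ⊕ κ) K × Matrix (ι ⊕ κ) (ι ⊕ κ) K}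
    (hP : P ∈ skewPencilsOfRankLE K (ι ⊕ κ) (2 * Fintype.card ι)) :
    ∃ (A : Matrix ι ι K × Matrix ι ι K) (C : Matrix ι κ K × Matrix ι κ K),
      A.1ᵀ = -A.1 ∧ A.2ᵀ = -A.2 ∧ PencilCongruent P (skewBlockPencil A C) := by
  obtain ⟨hP₁, hP₂, hrank⟩ := hP
  obtain ⟨L, hL₁, hL₂, hcodim⟩ := exists_isotropic_of_finrank_range_le
    (toBilin'_isAlt_of_transpose_eq_neg hP₁) (toBilin'_isAlt_of_transpose_eq_neg hP₂)
    (s := Fintype.card ι) fun μ => by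
      have hpencil : toBilin' P.1 - μ • toBilin' P.2 = toBilin' (P.1 - μ • P.2) := by
        rw [map_sub, map_smul]
      rw [hpencil, finrank_range_toBilin']
      exact hrank μ
  have hdim : finrank K (ι ⊕ κ → K) = Fintype.card ι + Fintype.card κ := by
    rw [finrank_fintype_fun_eq_card, Fintype.card_sum]
  obtain ⟨b, hb⟩ := exists_basis_sum_of_card_le_finrank (ι := ι) (κ := κ) hdim (L := L) (by omega)
  let S : Matrix (ι ⊕ κ) (ι ⊕ κ) K := of fun i j => b j i
  have hS : IsUnit S := linearIndependent_cols_iff_isUnit.1 b.linearIndependent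
  have hblocks (M : Matrix (ι ⊕ κ) (ι ⊕ κ) K) (hM : Mᵀ = -M)
      (hL : L ≤ (toBilin' M).orthogonal L) :
      fromBlocks (Sᵀ * M * S).toBlocks₁₁ (Sᵀ * M * S).toBlocks₁₂ (-(Sᵀ * M * S).toBlocks₁₂ᵀ) 0 =
        Sᵀ * M * S := by
    refine (eq_fromBlocks_of_transpose_eq_neg (transpose_mul_mul_eq_neg hM S) ?_).symm
    ext c d
    have hgram : (Sᵀ * M * S) (Sum.inr c) (Sum.inr d) =
        toBilin' M (b (Sum.inr c)) (b (Sum.inr d)) := by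
      rw [toBilin'_apply', Matrix.mul_assoc, Matrix.mul_apply]
      rfl
    exact hgram.trans (hL (hb d) _ (hb c))
  have hskew (M : Matrix (ι ⊕ κ) (ι ⊕ κ) K) (hM : Mᵀ = -M) :
      (Sᵀ * M * S).toBlocks₁₁ᵀ = -(Sᵀ * M * S).toBlocks₁₁ :=
    congrArg toBlocks₁₁ (transpose_mul_mul_eq_neg hM S)
  exact ⟨((Sᵀ * P.1 * S).toBlocks₁₁, (Sᵀ * P.2 * S).toBlocks₁₁),
    ((Sᵀ * P.1 * S).toBlocks₁₂, (Sᵀ * P.2 * S).toBlocks₁₂), hskew _ hP₁, hskew _ hP₂,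
    S, hS, hblocks _ hP₁ hL₁, hblocks _ hP₂ hL₂⟩

end IsotropicBlockForm

section GenericPencil

theorem skewPencilsOfRankLE_eq_closure_kroneckerPencil {α : Type*} [Fintype α] [DecidableEq α]
    {k : α → ℕ} (hk : ∀ a b, k a ≤ k b + 1) :
    skewPencilsOfRankLE ℂ ((Σ a, Fin (k a)) ⊕ Σ a, Fin (k a + 1)) (2 * ∑ a, k a) =
      closure {P | PencilCongruent (skewBlockPencil 0 (kroneckerPencil k)) P} := by
  have hcard : Fintype.card (Σ a, Fin (k a)) = ∑ a, k a := by simp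
  rw [← hcard]
  refine Set.Subset.antisymm (fun P hP => ?_) (closure_minimal (fun P hP => ?_)
    (isClosed_skewPencilsOfRankLE _))
  · obtain ⟨A, C, hA₁, hA₂, hcongr⟩ := exists_pencilCongruent_skewBlockPencil hP
    exact hcongr.symm.mem_closure <| skewBlockPencil_mem_closure
      (kroneckerPencil.dense_setOf_strictlyEquivalent hk)
      (fun p q => kroneckerPencil.eq_zero_of_transpose_eq_neg_of_mul_add_mul_eq_zero) hA₁ hA₂ C
  · exact PencilCongruent.mem_skewPencilsOfRankLE hP
      (skewBlockPencil_zero_mem_skewPencilsOfRankLE _)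

theorem blockDiagonal'_submatrix_equiv {α R : Type*} [DecidableEq α] [Zero R]
    {m n m' n' : α → Type*} (M : ∀ a, Matrix (m a) (n a) R) (e : ∀ a, m' a ≃ m a)
    (f : ∀ a, n' a ≃ n a) :
    blockDiagonal' (fun a => (M a).submatrix (e a) (f a)) =
      (blockDiagonal' M).submatrix (Equiv.sigmaCongrRight e) (Equiv.sigmaCongrRight f) := by
  ext ⟨a, i⟩ ⟨b, j⟩
  by_cases hab : a = b
  · subst hab
    simp [blockDiagonal'_apply_eq]
  · simp [blockDiagonal'_apply_ne, hab]

theorem blockDiagonal'_fromBlocks {α R : Type*} [DecidableEq α] [Zero R]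
    {m n m' n' : α → Type*} (A : ∀ a, Matrix (m a) (n a) R) (B : ∀ a, Matrix (m a) (n' a) R)
    (C : ∀ a, Matrix (m' a) (n a) R) (D : ∀ a, Matrix (m' a) (n' a) R) :
    blockDiagonal' (fun a => fromBlocks (A a) (B a) (C a) (D a)) =
      (fromBlocks (blockDiagonal' A) (blockDiagonal' B) (blockDiagonal' C)
        (blockDiagonal' D)).submatrix
          (Equiv.sigmaSumDistrib m m') (Equiv.sigmaSumDistrib n n') := by
  ext ⟨a, i | i⟩ ⟨b, j | j⟩ <;> by_cases hab : a = b
  all_goals first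
    | subst hab; simp [blockDiagonal'_apply_eq]
    | simp [blockDiagonal'_apply_ne, hab]

theorem blockDiagonal'_fromBlocks_skew_submatrix {α R : Type*} [DecidableEq α]
    [Ring R] {l m n : α → Type*} (C : ∀ a, Matrix (m a) (n a) R) (e : ∀ a, l a ≃ m a ⊕ n a) :
    blockDiagonal' (fun a => (fromBlocks 0 (C a) (-(C a)ᵀ) 0).submatrix (e a) (e a)) =
      (fromBlocks 0 (blockDiagonal' C) (-(blockDiagonal' C)ᵀ) 0).submatrix
        ((Equiv.sigmaCongrRight e).trans (Equiv.sigmaSumDistrib m n))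
        ((Equiv.sigmaCongrRight e).trans (Equiv.sigmaSumDistrib m n)) := by
  have hzero₁₁ : blockDiagonal' (fun a => (0 : Matrix (m a) (m a) R)) = 0 := blockDiagonal'_zero
  have hzero₂₂ : blockDiagonal' (fun a => (0 : Matrix (n a) (n a) R)) = 0 := blockDiagonal'_zero
  have hneg : blockDiagonal' (fun a => -(C a)ᵀ) = -(blockDiagonal' C)ᵀ := by
    rw [blockDiagonal'_transpose, ← blockDiagonal'_neg]
    rfl
  rw [blockDiagonal'_submatrix_equiv, blockDiagonal'_fromBlocks, hzero₁₁, hzero₂₂, hneg]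
  rfl

variable {m r : ℕ}

theorem Wpar_le_Wpar_add_one (i j : Fin (m - 2 * r)) : Wpar m r i ≤ Wpar m r j + 1 := by
  unfold Wpar
  split_ifs <;> omega

theorem sum_Wpar (hrm : 2 * r < m) : ∑ i, Wpar m r i = r := by
  have hmod : r % (m - 2 * r) < m - 2 * r := Nat.mod_lt _ (by omega)
  have hWpar (i : Fin (m - 2 * r)) :
      Wpar m r i = r / (m - 2 * r) + if (i : ℕ) < r % (m - 2 * r) then 1 else 0 := by
    unfold Wpar
    split_ifs <;> rfl
  have hcount : ∑ i : Fin (m - 2 * r), (if (i : ℕ) < r % (m - 2 * r) then 1 else 0) =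
      r % (m - 2 * r) := by
    simp [Fin.card_filter_val_lt, hmod.le]
  simp only [hWpar, Finset.sum_add_distrib, hcount, Finset.sum_const, Finset.card_univ,
    Fintype.card_fin, smul_eq_mul, Nat.div_add_mod]

theorem sum_Wsize (hrm : 2 * r < m) : ∑ i, Wsize m r i = m := by
  simp only [Wsize, Msize, Finset.sum_add_distrib, sum_Wpar hrm, Finset.sum_const,
    Finset.card_univ, Fintype.card_fin, smul_eq_mul, mul_one]
  omega

theorem skewPencilsOfRankLE_eq_closure_blockDiagonal' (hrm : 2 * r < m) :
    skewPencilsOfRankLE ℂ (Σ i, Fin (Wsize m r i)) (2 * r) =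
      closure {P | PencilCongruent (blockDiagonal' (WblkA m r), blockDiagonal' (WblkB m r)) P} := by
  let W := skewBlockPencil 0 (kroneckerPencil (Wpar m r))
  let splitBlock (i : Fin (m - 2 * r)) :
      Fin (Wsize m r i) ≃ Fin (Wpar m r i) ⊕ Fin (Wpar m r i + 1) := finSumFinEquiv.symm
  let e := (Equiv.sigmaCongrRight splitBlock).trans (Equiv.sigmaSumDistrib _ _)
  have hW : (blockDiagonal' (WblkA m r), blockDiagonal' (WblkB m r)) =
      (W.1.submatrix e e, W.2.submatrix e e) :=
    congrArg₂ Prod.mk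
      (blockDiagonal'_fromBlocks_skew_submatrix (fun i => Fmat (Wpar m r i)) splitBlock)
      (blockDiagonal'_fromBlocks_skew_submatrix (fun i => Gmat (Wpar m r i)) splitBlock)
  have hgeneric : skewPencilsOfRankLE ℂ _ (2 * r) = closure {P | PencilCongruent W P} := by
    simpa only [sum_Wpar hrm] using
      skewPencilsOfRankLE_eq_closure_kroneckerPencil (Wpar_le_Wpar_add_one (m := m) (r := r))
  rw [hW]
  exact skewPencilsOfRankLE_eq_closure_submatrix hgeneric e

end GenericPencil

/-- The set of m×m skew-symmetric pencils of normal rank at most `2r` is the closure of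
the congruence orbit of the generic pencil `W` made of `t` blocks `M_{α+1}` and
`m − 2r − t` blocks `M_α`. -/
theorem skew_symmetric_pencil_bounded_rank_eq_closure_orbit (m r : ℕ)
    (h2 : 2 ≤ 2 * r) (hrm : 2 * r ≤ m - 1) :
    ∃ e : Fin m ≃ (Σ i : Fin (m - 2 * r), Fin (Wsize m r i)),
      {AB : Matrix (Fin m) (Fin m) ℂ × Matrix (Fin m) (Fin m) ℂ |
        AB.1ᵀ = -AB.1 ∧ AB.2ᵀ = -AB.2 ∧ normalRank (pencilPoly AB.1 AB.2) ≤ 2 * r} =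
      closure {AB | ∃ S : Matrix (Fin m) (Fin m) ℂ, IsUnit S ∧
        AB.1 = Sᵀ * ((Matrix.blockDiagonal' (WblkA m r)).submatrix e e) * S ∧
        AB.2 = Sᵀ * ((Matrix.blockDiagonal' (WblkB m r)).submatrix e e) * S} := by
  have hlt : 2 * r < m := by omega
  let e : Fin m ≃ (Σ i : Fin (m - 2 * r), Fin (Wsize m r i)) :=
    Fintype.equivOfCardEq (by simp [sum_Wsize hlt])
  refine ⟨e, ?_⟩
  simp only [normalRank_pencilPoly_le_iff]
  exact skewPencilsOfRankLE_eq_closure_submatrix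
    (skewPencilsOfRankLE_eq_closure_blockDiagonal' hlt) e
end

section
/- Let m and r be integers with 2 ≤ 2r ≤ m−1, and let P be an m×m skew-symmetric matrix polynomial over ℂ in which every entry has degree at most 1 (a skew-symmetric matrix pencil), with normal rank at most 2r. Then there exist constant vectors u₁, …, u_r ∈ ℂ^m and polynomial vectors v₁, …, v_r ∈ (ℂ[λ])^m with every entry of each vᵢ of degree at most 1, such that P = Σᵢ₌₁^r (uᵢ vᵢᵀ − vᵢ uᵢᵀ). In particular, the set of m×m skew-symmetric pencils of normal rank at most 2r coincides exactly (without taking closures) with the set of pencils of the form U Vᵀ − V Uᵀ with U ∈ Matrix (Fin m) (Fin r) ℂ constant and V an m×r matrix polynomial of grade 1. -/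
open Polynomial Matrix

/-!
Every nonzero alternating pencil `P` has constant vectors `x`, `w ≠ 0` and a nonzero scalar
polynomial `p` with `P x = p w`: modulo their common kernel, the two coefficients map a space to one
of the same dimension, so they have a generalized eigenvector `x`. Choosing a constant `y` with
`wᵀ y = 1`, the pencil `P + (w (P y)ᵀ - (P y) wᵀ)` has `x` and `y` in its kernel in addition to
`ker P`, so its normal rank is smaller by two, and it is again an alternating pencil because `y` is
constant. Induction on `r` splits off the `r` summands.
-/

section Alternating

variable {n R S : Type*} [CommRing R] [CommRing S]

/-- Alternating square matrices: skew-symmetric with zero diagonal. The diagonal condition is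
automatic when `2` is invertible, and makes the rank arguments work in every characteristic. -/
def IsAlternatingMatrix (M : Matrix n n R) : Prop :=
  Mᵀ = -M ∧ ∀ i, M i i = 0

/-- The matrix `u vᵀ - v uᵀ` of the bivector `u ∧ v`. -/
def wedge (u v : n → R) : Matrix n n R :=
  vecMulVec u v - vecMulVec v u

theorem wedge_apply (u v : n → R) (i j : n) : wedge u v i j = u i * v j - v i * u j :=
  rfl

theorem wedge_neg (u v : n → R) : wedge u (-v) = -wedge u v := by
  simp [wedge, neg_add_eq_sub]

theorem map_wedge (φ : R →+* S) (u v : n → R) : (wedge u v).map φ = wedge (φ ∘ u) (φ ∘ v) := by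
  ext i j
  simp [wedge_apply]

theorem wedge_mulVec [Fintype n] (u v z : n → R) :
    wedge u v *ᵥ z = (v ⬝ᵥ z) • u - (u ⬝ᵥ z) • v := by
  simp [wedge, sub_mulVec, vecMulVec_mulVec]

theorem mul_transpose_sub_mul_transpose_eq_sum_wedge {ι : Type*} [Fintype ι] (U V : Matrix n ι R) :
    U * Vᵀ - V * Uᵀ = ∑ i, wedge (U.col i) (V.col i) := by
  ext a b
  simp [mul_apply, Matrix.sum_apply, wedge_apply]

theorem isAlternatingMatrix_iff_transpose_eq_neg [IsAddTorsionFree R] {M : Matrix n n R} :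
    IsAlternatingMatrix M ↔ Mᵀ = -M :=
  ⟨And.left, fun hM => ⟨hM, fun i => self_eq_neg.1 (congrFun₂ hM i i)⟩⟩

theorem isAlternatingMatrix_wedge (u v : n → R) : IsAlternatingMatrix (wedge u v) :=
  ⟨by simp [wedge], fun i => by rw [wedge_apply, mul_comm, sub_self]⟩

namespace IsAlternatingMatrix

variable {M N : Matrix n n R}

theorem add (hM : IsAlternatingMatrix M) (hN : IsAlternatingMatrix N) :
    IsAlternatingMatrix (M + N) :=
  ⟨by rw [transpose_add, hM.1, hN.1, neg_add], fun i => by simp [hM.2, hN.2]⟩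

theorem sum {ι : Type*} {s : Finset ι} {M : ι → Matrix n n R}
    (hM : ∀ k ∈ s, IsAlternatingMatrix (M k)) : IsAlternatingMatrix (∑ k ∈ s, M k) :=
  Finset.sum_induction M IsAlternatingMatrix (fun _ _ => add) (by simp [IsAlternatingMatrix]) hM

theorem map {Φ : Type*} [FunLike Φ R S] [AddMonoidHomClass Φ R S] (φ : Φ)
    (hM : IsAlternatingMatrix M) : IsAlternatingMatrix (M.map φ) := by
  refine ⟨?_, fun i => by simp [hM.2]⟩
  ext i j
  have hij : M j i = -M i j := congrFun₂ hM.1 i j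
  simp [hij]

variable [Fintype n]

theorem dotProduct_mulVec_eq_neg (hM : IsAlternatingMatrix M) (x y : n → R) :
    x ⬝ᵥ (M *ᵥ y) = -(y ⬝ᵥ (M *ᵥ x)) := by
  rw [dotProduct_mulVec, ← mulVec_transpose, hM.1, neg_mulVec, neg_dotProduct, dotProduct_comm]

theorem dotProduct_mulVec_self (hM : IsAlternatingMatrix M) (z : n → R) :
    z ⬝ᵥ (M *ᵥ z) = 0 := by
  simp only [dotProduct, mulVec, Finset.mul_sum, ← Finset.sum_product']
  refine Finset.sum_involution (fun ij _ => ij.swap) ?_ ?_ (by simp) (by simp)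
  · rintro ⟨i, j⟩ -
    have hij : M j i = -M i j := congrFun₂ hM.1 i j
    simp only [Prod.fst_swap, Prod.snd_swap, hij]
    ring
  · rintro ⟨i, j⟩ - hne hswap
    obtain rfl : j = i := congrArg Prod.fst hswap
    simp [hM.2] at hne

end IsAlternatingMatrix

end Alternating

section Rank

variable {m n F : Type*} [Fintype n] [Field F]

theorem rank_add_le_rank_add_rank [Finite m] (M N : Matrix m n F) :
    (M + N).rank ≤ M.rank + N.rank := by
  rw [Matrix.rank, mulVecLin_add]
  refine (Submodule.finrank_mono ?_).trans (Submodule.finrank_add_le_finrank_add_finrank _ _)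
  rintro _ ⟨z, rfl⟩
  exact Submodule.add_mem_sup ⟨z, rfl⟩ ⟨z, rfl⟩

theorem rank_mul_transpose_sub_mul_transpose_le {ι : Type*} [Fintype ι] (U V : Matrix n ι F) :
    (U * Vᵀ - V * Uᵀ).rank ≤ 2 * Fintype.card ι := by
  rw [sub_eq_add_neg, ← Matrix.neg_mul, two_mul]
  exact (rank_add_le_rank_add_rank _ _).trans <| add_le_add
    ((rank_mul_le_left _ _).trans (rank_le_card_width _))
    ((rank_mul_le_left _ _).trans (rank_le_card_width _))

theorem rank_add_two_le_of_ker_lt_of_lt_ker {M N : Matrix m n F} {L : Submodule F (n → F)}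
    (hML : LinearMap.ker M.mulVecLin < L) (hLN : L < LinearMap.ker N.mulVecLin) :
    N.rank + 2 ≤ M.rank := by
  have hM := LinearMap.finrank_range_add_finrank_ker M.mulVecLin
  have hN := LinearMap.finrank_range_add_finrank_ker N.mulVecLin
  have hMLrank := Submodule.finrank_lt_finrank_of_lt hML
  have hLNrank := Submodule.finrank_lt_finrank_of_lt hLN
  unfold Matrix.rank
  omega

-- The kernel grows strictly twice: by `x` inside the hyperplane orthogonal to `w`, then by `y`.
theorem IsAlternatingMatrix.rank_add_wedge_add_two_le {M : Matrix n n F}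
    (hM : IsAlternatingMatrix M) {x y w : n → F} {p : F} (hp : p ≠ 0) (hx : M *ᵥ x = p • w)
    (hwy : w ⬝ᵥ y = 1) : (M + wedge w (M *ᵥ y)).rank + 2 ≤ M.rank := by
  have hw : w ≠ 0 := by
    rintro rfl
    simp at hwy
  have hp_dot (z : n → F) : p * (w ⬝ᵥ z) = -(x ⬝ᵥ (M *ᵥ z)) := by
    rw [← smul_eq_mul, ← smul_dotProduct, ← hx, dotProduct_comm, hM.dotProduct_mulVec_eq_neg]
  have hy_dot (z : n → F) : (M *ᵥ y) ⬝ᵥ z = -(y ⬝ᵥ (M *ᵥ z)) := by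
    rw [dotProduct_comm, hM.dotProduct_mulVec_eq_neg]
  have dotProduct_eq_zero_of_ker {z : n → F} (hz : M *ᵥ z = 0) : w ⬝ᵥ z = 0 := by
    simpa [hz, hp] using hp_dot z
  have hwx : w ⬝ᵥ x = 0 := by
    simpa [hM.dotProduct_mulVec_self, hp] using hp_dot x
  let N := M + wedge w (M *ᵥ y)
  have hN (z : n → F) : N *ᵥ z = M *ᵥ z - (y ⬝ᵥ (M *ᵥ z)) • w - (w ⬝ᵥ z) • (M *ᵥ y) := by
    rw [add_mulVec, wedge_mulVec, hy_dot, neg_smul]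
    abel
  have hyw : y ⬝ᵥ w = 1 := dotProduct_comm y w ▸ hwy
  refine rank_add_two_le_of_ker_lt_of_lt_ker (N := N)
    (L := LinearMap.ker N.mulVecLin ⊓ LinearMap.ker (dotProductBilin F F w))
    (SetLike.lt_iff_le_and_exists.2 ⟨fun z hz => ?_, x, ?_, ?_⟩)
    (SetLike.lt_iff_le_and_exists.2 ⟨inf_le_left, y, ?_, ?_⟩)
  · rw [LinearMap.mem_ker, mulVecLin_apply] at hz
    simp [hN, hz, dotProduct_eq_zero_of_ker hz]
  · simp [hN, hx, hwx, hyw]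
  · simp [hx, hp, hw]
  · simp [hN, hwy, hM.dotProduct_mulVec_self]
  · simp [hwy]

end Rank

section CommonImageLine

variable {K V W : Type*} [Field K] [IsAlgClosed K] [AddCommGroup V] [Module K V]
  [FiniteDimensional K V] [AddCommGroup W] [Module K W]

theorem exists_ne_zero_apply_eq_zero_or_eq_smul [FiniteDimensional K W] [Nontrivial V]
    (hVW : Module.finrank K W ≤ Module.finrank K V) (f g : V →ₗ[K] W) :
    ∃ x ≠ 0, f x = 0 ∨ ∃ μ : K, g x = μ • f x := by
  by_cases hf : Function.Injective f
  · let e := f.linearEquivOfInjective hf (hVW.antisymm' (f.finrank_le_finrank_of_injective hf))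
    obtain ⟨μ, hμ⟩ := Module.End.exists_eigenvalue (e.symm.toLinearMap ∘ₗ g)
    obtain ⟨x, hx⟩ := hμ.exists_hasEigenvector
    have hgx : e.symm (g x) = μ • x := hx.apply_eq_smul
    rw [e.symm_apply_eq, map_smul] at hgx
    exact ⟨x, hx.2, .inr ⟨μ, hgx⟩⟩
  · rw [injective_iff_map_eq_zero] at hf
    push Not at hf
    obtain ⟨x, hx, hx0⟩ := hf
    exact ⟨x, hx0, .inl hx⟩

-- A complement of the common kernel is at least as large as the sum of the ranges.
theorem exists_apply_eq_smul_and_apply_eq_smul {f g : V →ₗ[K] W}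
    (hfg : f ≠ 0 ∨ g ≠ 0)
    (hdim : Module.finrank K ↥(LinearMap.range f ⊔ LinearMap.range g) +
      Module.finrank K ↥(LinearMap.ker f ⊓ LinearMap.ker g) ≤ Module.finrank K V) :
    ∃ (x : V) (w : W) (a b : K),
      w ≠ 0 ∧ (a ≠ 0 ∨ b ≠ 0) ∧ f x = a • w ∧ g x = b • w := by
  obtain ⟨C, hC⟩ := Submodule.exists_isCompl (LinearMap.ker f ⊓ LinearMap.ker g)
  have : Nontrivial C := by
    rw [Submodule.nontrivial_iff_ne_bot]
    rintro rfl
    obtain ⟨hf, hg⟩ := inf_eq_top_iff.1 (eq_top_of_isCompl_bot hC)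
    exact hfg.elim (· (LinearMap.ker_eq_top.1 hf)) (· (LinearMap.ker_eq_top.1 hg))
  have hCdim := Submodule.finrank_add_eq_of_isCompl hC
  let f' := (f.domRestrict C).codRestrict (LinearMap.range f ⊔ LinearMap.range g)
    fun x => Submodule.mem_sup_left ⟨x, rfl⟩
  let g' := (g.domRestrict C).codRestrict (LinearMap.range f ⊔ LinearMap.range g)
    fun x => Submodule.mem_sup_right ⟨x, rfl⟩
  obtain ⟨x, hx0, hx⟩ := exists_ne_zero_apply_eq_zero_or_eq_smul (by omega) f' g'
  have not_both_zero : ¬(f x = 0 ∧ g x = 0) := fun h =>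
    hx0 (Subtype.ext (Submodule.disjoint_def.1 hC.disjoint x h x.2))
  rcases hx with hfx | ⟨μ, hgx⟩
  · replace hfx : f x = 0 := congrArg Subtype.val hfx
    exact ⟨x, g x, 0, 1, fun h => not_both_zero ⟨hfx, h⟩, by simp, by simp [hfx], by simp⟩
  · replace hgx : g x = μ • f x := congrArg Subtype.val hgx
    exact ⟨x, f x, 1, μ, fun h => not_both_zero ⟨h, by rw [hgx, h, smul_zero]⟩, by simp, by simp,
      hgx⟩

end CommonImageLine

section Stacked

variable {m₁ m₂ n K : Type*} [Field K]

theorem ker_mulVecLin_fromRows [Fintype n] (A : Matrix m₁ n K) (B : Matrix m₂ n K) :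
    LinearMap.ker (fromRows A B).mulVecLin =
      LinearMap.ker A.mulVecLin ⊓ LinearMap.ker B.mulVecLin := by
  ext z
  simp [fromRows_mulVec, funext_iff]

theorem range_mulVecLin_fromCols [Fintype m₁] [Fintype m₂] (A : Matrix n m₁ K)
    (B : Matrix n m₂ K) :
    LinearMap.range (fromCols A B).mulVecLin =
      LinearMap.range A.mulVecLin ⊔ LinearMap.range B.mulVecLin := by
  have hcol : (fromCols A B).col = Sum.elim A.col B.col := by
    ext (j | j) i <;> rfl
  rw [range_mulVecLin, range_mulVecLin, range_mulVecLin, hcol, Set.Sum.elim_range,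
    Submodule.span_union]

variable [Fintype n]

theorem finrank_range_transpose_sup_add_finrank_ker_inf [Fintype m₁] [Fintype m₂]
    (A : Matrix m₁ n K) (B : Matrix m₂ n K) :
    Module.finrank K ↥(LinearMap.range Aᵀ.mulVecLin ⊔ LinearMap.range Bᵀ.mulVecLin) +
      Module.finrank K ↥(LinearMap.ker A.mulVecLin ⊓ LinearMap.ker B.mulVecLin) =
      Fintype.card n := by
  rw [← ker_mulVecLin_fromRows, ← range_mulVecLin_fromCols, ← transpose_fromRows, ← Matrix.rank,
    rank_transpose, Matrix.rank, LinearMap.finrank_range_add_finrank_ker,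
    Module.finrank_fintype_fun_eq_card]

theorem exists_mulVec_eq_smul_and_mulVec_eq_smul [IsAlgClosed K] {A B : Matrix n n K}
    (hA : Aᵀ = -A) (hB : Bᵀ = -B) (hAB : A ≠ 0 ∨ B ≠ 0) :
    ∃ (x w : n → K) (a b : K), w ≠ 0 ∧ (a ≠ 0 ∨ b ≠ 0) ∧ A *ᵥ x = a • w ∧ B *ᵥ x = b • w := by
  classical
  have hrange {M : Matrix n n K} (hM : Mᵀ = -M) :
      LinearMap.range Mᵀ.mulVecLin = LinearMap.range M.mulVecLin := by
    have hneg : (-M).mulVecLin = -M.mulVecLin := LinearMap.ext fun z => neg_mulVec z M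
    rw [hM, hneg, LinearMap.range_neg]
  have mulVecLin_ne_zero {M : Matrix n n K} (hM : M ≠ 0) : M.mulVecLin ≠ 0 :=
    toLin'.map_ne_zero_iff.2 hM
  apply exists_apply_eq_smul_and_apply_eq_smul (hAB.imp mulVecLin_ne_zero mulVecLin_ne_zero)
  rw [← hrange hA, ← hrange hB, finrank_range_transpose_sup_add_finrank_ker_inf,
    Module.finrank_fintype_fun_eq_card]

end Stacked

section Degree

variable {m n R : Type*} [CommRing R]

theorem natDegree_wedge_C_le {v : n → R[X]} {d : ℕ} (hv : ∀ i, (v i).natDegree ≤ d) (u : n → R)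
    (i j : n) : (wedge (C ∘ u) v i j).natDegree ≤ d :=
  natDegree_sub_le_of_le ((natDegree_C_mul_le _ _).trans (hv j))
    ((natDegree_mul_C_le _ _).trans (hv i)) |>.trans_eq (max_self d)

variable [Fintype n]

theorem coeff_mulVec_C (P : Matrix m n R[X]) (x : n → R) (i : m) (k : ℕ) :
    ((P *ᵥ (C ∘ x)) i).coeff k = (P.map (coeff · k) *ᵥ x) i := by
  simp [mulVec, dotProduct]

theorem natDegree_mulVec_C_le {P : Matrix m n R[X]} {d : ℕ} (hP : ∀ i j, (P i j).natDegree ≤ d)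
    (x : n → R) (i : m) : ((P *ᵥ (C ∘ x)) i).natDegree ≤ d :=
  natDegree_sum_le_of_forall_le _ _ fun j _ => (natDegree_mul_C_le _ _).trans (hP i j)

end Degree

section Pencil

variable {n K : Type*} [Fintype n] [Field K] {P : Matrix n n K[X]}

theorem exists_mulVec_C_eq_smul_C [IsAlgClosed K] (hP : Pᵀ = -P)
    (hdeg : ∀ i j, (P i j).natDegree ≤ 1) (hP0 : P ≠ 0) :
    ∃ (x w : n → K) (p : K[X]), w ≠ 0 ∧ p ≠ 0 ∧ P *ᵥ (C ∘ x) = p • (C ∘ w) := by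
  have coeff_eq_zero (i j : n) {k : ℕ} (hk : 2 ≤ k) : (P i j).coeff k = 0 :=
    coeff_eq_zero_of_natDegree_lt ((hdeg i j).trans_lt hk)
  have coeff_skew (k : ℕ) : (P.map (coeff · k))ᵀ = -P.map (coeff · k) := by
    ext i j
    simpa using congrArg (coeff · k) (congrFun₂ hP i j)
  have coeff_ne_zero : P.map (coeff · 0) ≠ 0 ∨ P.map (coeff · 1) ≠ 0 := by
    by_contra! h
    refine hP0 (Matrix.ext fun i j => Polynomial.ext fun k => ?_)
    match k with
    | 0 => exact congrFun₂ h.1 i j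
    | 1 => exact congrFun₂ h.2 i j
    | k + 2 => exact coeff_eq_zero i j (by omega)
  obtain ⟨x, w, a, b, hw, hab, hax, hbx⟩ :=
    exists_mulVec_eq_smul_and_mulVec_eq_smul (coeff_skew 0) (coeff_skew 1) coeff_ne_zero
  refine ⟨x, w, C b * X + C a, hw, fun hp => ?_, ?_⟩
  · have ha : a = 0 := by simpa using congrArg (coeff · 0) hp
    have hb : b = 0 := by simpa using congrArg (coeff · 1) hp
    simp [ha, hb] at hab
  · ext i k
    rw [coeff_mulVec_C]
    match k with
    | 0 => simp [hax]
    | 1 => simp [hbx]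
    | k + 2 => simp [mulVec, dotProduct, coeff_eq_zero]

theorem IsAlternatingMatrix.exists_wedge_reduction [IsAlgClosed K] (hP : IsAlternatingMatrix P)
    (hdeg : ∀ i j, (P i j).natDegree ≤ 1) (hP0 : P ≠ 0) :
    ∃ (w : n → K) (v : n → K[X]), (∀ i, (v i).natDegree ≤ 1) ∧
      ((P + wedge (C ∘ w) v).map (algebraMap K[X] (RatFunc K))).rank + 2 ≤
        (P.map (algebraMap K[X] (RatFunc K))).rank := by
  classical
  obtain ⟨x, w, p, hw, hp, hPx⟩ := exists_mulVec_C_eq_smul_C hP.1 hdeg hP0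
  obtain ⟨k, hk⟩ := Function.ne_iff.1 hw
  let y : n → K := Pi.single k (w k)⁻¹
  have hwy : w ⬝ᵥ y = 1 := by simpa [y] using mul_inv_cancel₀ hk
  refine ⟨w, P *ᵥ (C ∘ y), natDegree_mulVec_C_le hdeg y, ?_⟩
  let φ := algebraMap K[X] (RatFunc K)
  have hφ (z : n → K[X]) : P.map φ *ᵥ (φ ∘ z) = φ ∘ (P *ᵥ z) :=
    funext fun i => (φ.map_mulVec P z i).symm
  have hmap : (P + wedge (C ∘ w) (P *ᵥ (C ∘ y))).map φ =
      P.map φ + wedge (φ ∘ C ∘ w) (P.map φ *ᵥ (φ ∘ C ∘ y)) := by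
    rw [Matrix.map_add φ (map_add φ), map_wedge, hφ]
  rw [hmap]
  refine (hP.map φ).rank_add_wedge_add_two_le (x := φ ∘ C ∘ x) (p := φ p) ?_ ?_ ?_
  · exact (map_ne_zero_iff φ (IsFractionRing.injective _ _)).2 hp
  · rw [hφ, hPx]
    ext
    simp
  · rw [← φ.map_dotProduct, ← C.map_dotProduct, hwy, map_one, map_one]

theorem IsAlternatingMatrix.exists_eq_sum_wedge [IsAlgClosed K] {r : ℕ}
    (hP : IsAlternatingMatrix P) (hdeg : ∀ i j, (P i j).natDegree ≤ 1)
    (hrk : (P.map (algebraMap K[X] (RatFunc K))).rank ≤ 2 * r) :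
    ∃ (u : Fin r → n → K) (v : Fin r → n → K[X]),
      (∀ i a, (v i a).natDegree ≤ 1) ∧ P = ∑ i, wedge (C ∘ u i) (v i) := by
  induction r generalizing P with
  | zero =>
    have hP0 : P = 0 := by
      by_contra hP0
      obtain ⟨_, _, _, hdrop⟩ := hP.exists_wedge_reduction hdeg hP0
      omega
    exact ⟨0, 0, by simp, by simp [hP0]⟩
  | succ r ih =>
    by_cases hP0 : P = 0
    · exact ⟨0, 0, by simp, by ext; simp [hP0, Matrix.sum_apply, wedge_apply]⟩
    obtain ⟨w, q, hq, hdrop⟩ := hP.exists_wedge_reduction hdeg hP0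
    have hdeg' (i j : n) : ((P + wedge (C ∘ w) q) i j).natDegree ≤ 1 :=
      natDegree_add_le_of_degree_le (hdeg i j) (natDegree_wedge_C_le hq w i j)
    obtain ⟨u, v, hv, hsum⟩ := ih (hP.add (isAlternatingMatrix_wedge (C ∘ w) q)) hdeg' (by omega)
    refine ⟨Fin.cons w u, Fin.cons (-q) v, Fin.cases (by simpa using hq) (by simpa using hv), ?_⟩
    rw [Fin.sum_univ_succ]
    simp only [Fin.cons_zero, Fin.cons_succ]
    rw [← hsum, wedge_neg, neg_add_cancel_comm_assoc]

theorem isAlternatingMatrix_pencil_iff_eq_mul_transpose_sub [IsAlgClosed K] {r : ℕ} :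
    (IsAlternatingMatrix P ∧ (∀ i j, (P i j).natDegree ≤ 1) ∧
        (P.map (algebraMap K[X] (RatFunc K))).rank ≤ 2 * r) ↔
      ∃ (U : Matrix n (Fin r) K) (V : Matrix n (Fin r) K[X]),
        (∀ i j, (V i j).natDegree ≤ 1) ∧ P = U.map C * Vᵀ - V * (U.map C)ᵀ := by
  constructor
  · rintro ⟨hP, hdeg, hrk⟩
    obtain ⟨u, v, hv, rfl⟩ := hP.exists_eq_sum_wedge hdeg hrk
    refine ⟨(of u)ᵀ, (of v)ᵀ, fun i j => hv j i, ?_⟩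
    exact (mul_transpose_sub_mul_transpose_eq_sum_wedge ((of u)ᵀ.map C) (of v)ᵀ).symm
  · rintro ⟨U, V, hV, rfl⟩
    refine ⟨?_, fun i j => ?_, ?_⟩
    · rw [mul_transpose_sub_mul_transpose_eq_sum_wedge]
      exact .sum fun k _ => isAlternatingMatrix_wedge _ _
    · rw [mul_transpose_sub_mul_transpose_eq_sum_wedge, Matrix.sum_apply]
      exact natDegree_sum_le_of_forall_le _ _ fun k _ =>
        natDegree_wedge_C_le (fun i => hV i k) (U.col k) i j
    · rw [Matrix.map_sub _ (map_sub _), Matrix.map_mul, Matrix.map_mul, transpose_map,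
        transpose_map (M := U.map C)]
      exact (rank_mul_transpose_sub_mul_transpose_le _ _).trans_eq (by rw [Fintype.card_fin])

end Pencil

theorem skew_symmetric_pencil_rank_one_decomposition_general {n K : Type*} [Fintype n] [Field K]
    [IsAlgClosed K] (r : ℕ) (P : Matrix n n K[X]) (hP : IsAlternatingMatrix P)
    (hdeg : ∀ i j, (P i j).natDegree ≤ 1)
    (hrk : (P.map (algebraMap K[X] (RatFunc K))).rank ≤ 2 * r) :
    (∃ (u : Fin r → n → K) (v : Fin r → n → K[X]),
      (∀ i a, (v i a).natDegree ≤ 1) ∧ P = ∑ i, wedge (C ∘ u i) (v i)) ∧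
    {Q : Matrix n n K[X] | IsAlternatingMatrix Q ∧ (∀ i j, (Q i j).natDegree ≤ 1) ∧
        (Q.map (algebraMap K[X] (RatFunc K))).rank ≤ 2 * r} =
      {Q : Matrix n n K[X] | ∃ (U : Matrix n (Fin r) K) (V : Matrix n (Fin r) K[X]),
        (∀ i j, (V i j).natDegree ≤ 1) ∧ Q = U.map C * Vᵀ - V * (U.map C)ᵀ} :=
  ⟨hP.exists_eq_sum_wedge hdeg hrk,
    Set.ext fun _ => isAlternatingMatrix_pencil_iff_eq_mul_transpose_sub⟩

/-- Rank-1 decomposition of skew-symmetric matrix pencils: every m×m skew-symmetric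
pencil of normal rank at most `2r` equals `Σᵢ (uᵢ vᵢᵀ − vᵢ uᵢᵀ)` with constant vectors
`uᵢ` and degree-≤1 polynomial vectors `vᵢ`; consequently the set of such pencils
coincides exactly (without taking closures) with the set of pencils `U Vᵀ − V Uᵀ` with
`U` constant and `V` of grade 1. -/
theorem skew_symmetric_pencil_rank_one_decomposition (m r : ℕ)
    (h2 : 2 ≤ 2 * r) (hrm : 2 * r ≤ m - 1)
    (P : Matrix (Fin m) (Fin m) (Polynomial ℂ)) (hP : Pᵀ = -P)
    (hdeg : ∀ i j, (P i j).natDegree ≤ 1) (hrk : normalRank P ≤ 2 * r) :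
    (∃ (u : Fin r → Fin m → ℂ) (v : Fin r → Fin m → Polynomial ℂ),
      (∀ i a, (v i a).natDegree ≤ 1) ∧
      P = ∑ i : Fin r, Matrix.of fun a b =>
            Polynomial.C (u i a) * v i b - v i a * Polynomial.C (u i b)) ∧
    {Q : Matrix (Fin m) (Fin m) (Polynomial ℂ) |
        Qᵀ = -Q ∧ (∀ i j, (Q i j).natDegree ≤ 1) ∧ normalRank Q ≤ 2 * r} =
      {Q : Matrix (Fin m) (Fin m) (Polynomial ℂ) |
        ∃ (U : Matrix (Fin m) (Fin r) ℂ) (V : Matrix (Fin m) (Fin r) (Polynomial ℂ)),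
          (∀ i j, (V i j).natDegree ≤ 1) ∧
          Q = U.map Polynomial.C * Vᵀ - V * (U.map Polynomial.C)ᵀ} := by
  simp only [← isAlternatingMatrix_iff_transpose_eq_neg] at hP ⊢
  exact skew_symmetric_pencil_rank_one_decomposition_general r P hP hdeg hrk
end

section
/- Let r be a positive integer, let s₁, …, s_r be positive real numbers, let S₁ ∈ Matrix (Fin r) (Fin r) ℂ be the diagonal matrix with diagonal entries s₁, …, s_r, and let E ∈ Matrix (Fin r) (Fin r) ℂ be skew-symmetric (Eᵀ = −E). Define X₁ ∈ Matrix (Fin r) (Fin r) ℂ by (X₁)_{j,i} = E_{i,j}/(sᵢ + sⱼ) for all i, j. Then X₁ is skew-symmetric and S₁ X₁ᵀ − X₁ S₁ᵀ = E. Moreover, for any E₁₂ ∈ Matrix (Fin r) (Fin k) ℂ, the matrix X₂ := E₁₂ᵀ S₁⁻¹ ∈ Matrix (Fin k) (Fin r) ℂ satisfies S₁ X₂ᵀ = E₁₂. Consequently, the skew-symmetric matrix equation arising in each alternating step of the pencil algorithm is exactly solvable in these two blocks. -/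
open Matrix

/-!
For skew-symmetric `X₁` and `Y = X₁ᵀ`, the equation `S₁ X₁ᵀ - X₁ S₁ᵀ = E` becomes the Sylvester
equation `S₁ Y + Y S₁ = E`. Since `S₁` is diagonal, it decouples into the scalar equations
`(sᵢ + sⱼ) Yᵢⱼ = Eᵢⱼ`, and dividing by the symmetric weights `sᵢ + sⱼ` preserves skew-symmetry.
-/

section Sylvester

variable {m n K : Type*}

/-- The entrywise solution `X` of the Sylvester equation `diagonal a * X + X * diagonal b = E` with
diagonal coefficients. The entry `X i j` takes the junk value `0` where `a i + b j = 0`. -/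
def diagonalSylvester [Semifield K] (a : m → K) (b : n → K) (E : Matrix m n K) : Matrix m n K :=
  Matrix.of fun i j => E i j / (a i + b j)

theorem diagonalSylvester_transpose [Semifield K] (a : m → K) (b : n → K) (E : Matrix m n K) :
    (diagonalSylvester a b E)ᵀ = diagonalSylvester b a Eᵀ := by
  ext i j
  simp [diagonalSylvester, add_comm]

theorem diagonalSylvester_neg [Field K] (a : m → K) (b : n → K) (E : Matrix m n K) :
    diagonalSylvester a b (-E) = -diagonalSylvester a b E := by
  ext i j
  simp [diagonalSylvester, neg_div]

theorem diagonalSylvester_transpose_eq_neg [Field K] (s : n → K) {E : Matrix n n K}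
    (hE : Eᵀ = -E) : (diagonalSylvester s s E)ᵀ = -diagonalSylvester s s E := by
  rw [diagonalSylvester_transpose, hE, diagonalSylvester_neg]

theorem diagonal_mul_diagonalSylvester_add [Fintype m] [DecidableEq m] [Fintype n] [DecidableEq n]
    [Semifield K] {a : m → K} {b : n → K} (hab : ∀ i j, a i + b j ≠ 0) (E : Matrix m n K) :
    diagonal a * diagonalSylvester a b E + diagonalSylvester a b E * diagonal b = E := by
  ext i j
  rw [Matrix.add_apply, diagonal_mul, mul_diagonal, mul_comm _ (b j), ← add_mul]
  exact mul_div_cancel₀ (E i j) (hab i j)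

end Sylvester

theorem mul_transpose_transpose_mul_inv {m n R : Type*} [Fintype n] [DecidableEq n] [CommRing R]
    {S : Matrix n n R} (hS : S.IsSymm) (hdet : IsUnit S.det) (B : Matrix n m R) :
    S * (Bᵀ * S⁻¹)ᵀ = B := by
  rw [transpose_mul, transpose_transpose, transpose_nonsing_inv, hS.eq,
    mul_nonsing_inv_cancel_left _ _ hdet]

theorem isUnit_det_diagonal {n R : Type*} [Fintype n] [DecidableEq n] [CommRing R] {s : n → R}
    (hs : ∀ i, IsUnit (s i)) : IsUnit (diagonal s).det := by
  rwa [← isUnit_iff_isUnit_det, isUnit_diagonal, Pi.isUnit_iff]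

theorem pencil_alternating_step_exact_solution_general {n K : Type*} [Fintype n] [DecidableEq n]
    [Field K] {s : n → K} (hs : ∀ i j, s i + s j ≠ 0) {E : Matrix n n K} (hE : Eᵀ = -E)
    {S1 : Matrix n n K} (hS1 : S1 = diagonal s)
    {X1 : Matrix n n K} (hX1 : X1 = Matrix.of fun j i => E i j / (s i + s j)) :
    X1ᵀ = -X1 ∧
    S1 * X1ᵀ - X1 * S1ᵀ = E ∧
    ∀ {m : Type*} (E12 : Matrix n m K), S1 * (E12ᵀ * S1⁻¹)ᵀ = E12 := by
  have hX1_eq : X1 = (diagonalSylvester s s E)ᵀ := hX1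
  have hX1_skew : X1ᵀ = -X1 := by
    rw [hX1_eq, transpose_transpose, diagonalSylvester_transpose_eq_neg s hE, neg_neg]
  have hS1_symm : S1.IsSymm := hS1 ▸ isSymm_diagonal s
  have hs_ne_zero (i : n) : s i ≠ 0 := fun hi => hs i i (by rw [hi, add_zero])
  have hS1_det : IsUnit S1.det := hS1 ▸ isUnit_det_diagonal fun i => (hs_ne_zero i).isUnit
  refine ⟨hX1_skew, ?_, fun E12 => ?_⟩
  · calc
      S1 * X1ᵀ - X1 * S1ᵀ = S1 * X1ᵀ + X1ᵀ * S1 := by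
        rw [hS1_symm.eq, hX1_skew, neg_mul, ← sub_eq_add_neg]
      _ = E := by rw [hX1_eq, transpose_transpose, hS1, diagonal_mul_diagonalSylvester_add hs]
  · exact mul_transpose_transpose_mul_inv hS1_symm hS1_det E12

/-- The skew-symmetric matrix equation `S₁ X₁ᵀ − X₁ S₁ᵀ = E` and the equation
`S₁ X₂ᵀ = E₁₂` arising in each alternating step of the pencil algorithm are exactly
solvable: `X₁` given by `(X₁)_{j,i} = E_{i,j}/(sᵢ + sⱼ)` is skew-symmetric and solves the
first one, and `X₂ := E₁₂ᵀ S₁⁻¹` solves the second one. -/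
theorem pencil_alternating_step_exact_solution (r : ℕ) (hr : 0 < r)
    (s : Fin r → ℝ) (hs : ∀ i, 0 < s i)
    (E : Matrix (Fin r) (Fin r) ℂ) (hE : Eᵀ = -E)
    (S1 : Matrix (Fin r) (Fin r) ℂ) (hS1 : S1 = Matrix.diagonal fun i => (s i : ℂ))
    (X1 : Matrix (Fin r) (Fin r) ℂ)
    (hX1 : X1 = Matrix.of fun j i => E i j / ((s i : ℂ) + (s j : ℂ))) :
    X1ᵀ = -X1 ∧
    S1 * X1ᵀ - X1 * S1ᵀ = E ∧
    ∀ (k : ℕ) (E12 : Matrix (Fin r) (Fin k) ℂ), S1 * (E12ᵀ * S1⁻¹)ᵀ = E12 := by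
  have hs_add (i j : Fin r) : (s i : ℂ) + s j ≠ 0 := mod_cast (add_pos (hs i) (hs j)).ne'
  have ⟨hskew, hblock, hrect⟩ := pencil_alternating_step_exact_solution_general hs_add hE hS1 hX1
  exact ⟨hskew, hblock, fun _ => hrect⟩
end
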